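/- arXiv:1005.5638 — 5 statements merged into one kernel-verified Lean document; each statement's English description precedes it below -/
import Mathlib

section
/- Let T ≥ 2, ω ≠ 0, γ₁ > 0, γ₂ > 0, and let (v¹, v², ξ₁, ξ₂, ξ₃) be a classical solution of the back-and-forth periodic system on [0,∞). Then, as n → ∞ along natural numbers: ∫₀¹ (|v¹(2nT,x)|² + |∂ₓv¹(2nT,x)|²) dx → 0, ∫₀¹ |v²(2nT,x)|² dx → 0, and ξ₁(2nT) → 0, ξ₂(2nT) → 0, ξ₃(2nT) → 0. (This is the convergence of the back-and-forth observer error to zero, Theorem 2 of the paper, stated for classical solutions.) -/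
open Set Filter MeasureTheory intervalIntegral

/-- A classical solution of the back-and-forth periodic system on `[0,∞)` with
switching period `T`: on each forward strip `[2kT,(2k+1)T]` it solves
`∂ₜv¹ = v²`, `∂ₜv² = ∂ₓₓv¹`, `ξ₁' = ξ₂ − γ₂ξ₁`, `ξ₂' = −ω²ξ₁ + ∂ₓv¹(·,0)`,
`ξ₃' = ξ₁`; on each backward strip `[(2k+1)T,(2k+2)T]` it solves the time-reversed
equations; it satisfies the boundary conditions `v¹(t,1) = 0` and
`v¹(t,0) = γ₁ξ₁(t) + γ₁γ₂ξ₃(t)`; it is continuous globally and `C²` (resp. `C¹`)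
on each strip (resp. interval), the derivatives on the strips being derivatives
within the strips. -/
structure BackAndForthSol (T ω γ₁ γ₂ : ℝ) where
  v1 : ℝ → ℝ → ℝ
  v2 : ℝ → ℝ → ℝ
  ξ1 : ℝ → ℝ
  ξ2 : ℝ → ℝ
  ξ3 : ℝ → ℝ
  cont_v1 : ContinuousOn (Function.uncurry v1) (Ici 0 ×ˢ Icc 0 1)
  cont_v2 : ContinuousOn (Function.uncurry v2) (Ici 0 ×ˢ Icc 0 1)
  cont_ξ1 : ContinuousOn ξ1 (Ici 0)
  cont_ξ2 : ContinuousOn ξ2 (Ici 0)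
  cont_ξ3 : ContinuousOn ξ3 (Ici 0)
  smooth_v1_fwd : ∀ k : ℕ, ContDiffOn ℝ 2 (Function.uncurry v1)
    (Icc (2 * (k:ℝ) * T) ((2 * (k:ℝ) + 1) * T) ×ˢ Icc (0:ℝ) 1)
  smooth_v2_fwd : ∀ k : ℕ, ContDiffOn ℝ 2 (Function.uncurry v2)
    (Icc (2 * (k:ℝ) * T) ((2 * (k:ℝ) + 1) * T) ×ˢ Icc (0:ℝ) 1)
  smooth_v1_bwd : ∀ k : ℕ, ContDiffOn ℝ 2 (Function.uncurry v1)
    (Icc ((2 * (k:ℝ) + 1) * T) ((2 * (k:ℝ) + 2) * T) ×ˢ Icc (0:ℝ) 1)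
  smooth_v2_bwd : ∀ k : ℕ, ContDiffOn ℝ 2 (Function.uncurry v2)
    (Icc ((2 * (k:ℝ) + 1) * T) ((2 * (k:ℝ) + 2) * T) ×ˢ Icc (0:ℝ) 1)
  smooth_ξ1_fwd : ∀ k : ℕ, ContDiffOn ℝ 1 ξ1 (Icc (2 * (k:ℝ) * T) ((2 * (k:ℝ) + 1) * T))
  smooth_ξ2_fwd : ∀ k : ℕ, ContDiffOn ℝ 1 ξ2 (Icc (2 * (k:ℝ) * T) ((2 * (k:ℝ) + 1) * T))
  smooth_ξ3_fwd : ∀ k : ℕ, ContDiffOn ℝ 1 ξ3 (Icc (2 * (k:ℝ) * T) ((2 * (k:ℝ) + 1) * T))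
  smooth_ξ1_bwd : ∀ k : ℕ, ContDiffOn ℝ 1 ξ1 (Icc ((2 * (k:ℝ) + 1) * T) ((2 * (k:ℝ) + 2) * T))
  smooth_ξ2_bwd : ∀ k : ℕ, ContDiffOn ℝ 1 ξ2 (Icc ((2 * (k:ℝ) + 1) * T) ((2 * (k:ℝ) + 2) * T))
  smooth_ξ3_bwd : ∀ k : ℕ, ContDiffOn ℝ 1 ξ3 (Icc ((2 * (k:ℝ) + 1) * T) ((2 * (k:ℝ) + 2) * T))
  pde1_fwd : ∀ k : ℕ, ∀ t ∈ Icc (2 * (k:ℝ) * T) ((2 * (k:ℝ) + 1) * T),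
    ∀ x ∈ Icc (0:ℝ) 1,
    derivWithin (fun s => v1 s x) (Icc (2 * (k:ℝ) * T) ((2 * (k:ℝ) + 1) * T)) t = v2 t x
  pde2_fwd : ∀ k : ℕ, ∀ t ∈ Icc (2 * (k:ℝ) * T) ((2 * (k:ℝ) + 1) * T),
    ∀ x ∈ Icc (0:ℝ) 1,
    derivWithin (fun s => v2 s x) (Icc (2 * (k:ℝ) * T) ((2 * (k:ℝ) + 1) * T)) t
      = derivWithin (fun y => derivWithin (fun y' => v1 t y') (Icc (0:ℝ) 1) y)
          (Icc (0:ℝ) 1) x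
  pde1_bwd : ∀ k : ℕ, ∀ t ∈ Icc ((2 * (k:ℝ) + 1) * T) ((2 * (k:ℝ) + 2) * T),
    ∀ x ∈ Icc (0:ℝ) 1,
    derivWithin (fun s => v1 s x) (Icc ((2 * (k:ℝ) + 1) * T) ((2 * (k:ℝ) + 2) * T)) t
      = -v2 t x
  pde2_bwd : ∀ k : ℕ, ∀ t ∈ Icc ((2 * (k:ℝ) + 1) * T) ((2 * (k:ℝ) + 2) * T),
    ∀ x ∈ Icc (0:ℝ) 1,
    derivWithin (fun s => v2 s x) (Icc ((2 * (k:ℝ) + 1) * T) ((2 * (k:ℝ) + 2) * T)) t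
      = -derivWithin (fun y => derivWithin (fun y' => v1 t y') (Icc (0:ℝ) 1) y)
          (Icc (0:ℝ) 1) x
  ode1_fwd : ∀ k : ℕ, ∀ t ∈ Icc (2 * (k:ℝ) * T) ((2 * (k:ℝ) + 1) * T),
    derivWithin ξ1 (Icc (2 * (k:ℝ) * T) ((2 * (k:ℝ) + 1) * T)) t = ξ2 t - γ₂ * ξ1 t
  ode2_fwd : ∀ k : ℕ, ∀ t ∈ Icc (2 * (k:ℝ) * T) ((2 * (k:ℝ) + 1) * T),
    derivWithin ξ2 (Icc (2 * (k:ℝ) * T) ((2 * (k:ℝ) + 1) * T)) t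
      = -ω ^ 2 * ξ1 t + derivWithin (fun y => v1 t y) (Icc (0:ℝ) 1) 0
  ode3_fwd : ∀ k : ℕ, ∀ t ∈ Icc (2 * (k:ℝ) * T) ((2 * (k:ℝ) + 1) * T),
    derivWithin ξ3 (Icc (2 * (k:ℝ) * T) ((2 * (k:ℝ) + 1) * T)) t = ξ1 t
  ode1_bwd : ∀ k : ℕ, ∀ t ∈ Icc ((2 * (k:ℝ) + 1) * T) ((2 * (k:ℝ) + 2) * T),
    derivWithin ξ1 (Icc ((2 * (k:ℝ) + 1) * T) ((2 * (k:ℝ) + 2) * T)) t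
      = -ξ2 t - γ₂ * ξ1 t
  ode2_bwd : ∀ k : ℕ, ∀ t ∈ Icc ((2 * (k:ℝ) + 1) * T) ((2 * (k:ℝ) + 2) * T),
    derivWithin ξ2 (Icc ((2 * (k:ℝ) + 1) * T) ((2 * (k:ℝ) + 2) * T)) t
      = ω ^ 2 * ξ1 t - derivWithin (fun y => v1 t y) (Icc (0:ℝ) 1) 0
  ode3_bwd : ∀ k : ℕ, ∀ t ∈ Icc ((2 * (k:ℝ) + 1) * T) ((2 * (k:ℝ) + 2) * T),
    derivWithin ξ3 (Icc ((2 * (k:ℝ) + 1) * T) ((2 * (k:ℝ) + 2) * T)) t = ξ1 t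
  bc1 : ∀ t ∈ Ici (0:ℝ), v1 t 1 = 0
  bc0 : ∀ t ∈ Ici (0:ℝ), v1 t 0 = γ₁ * ξ1 t + γ₁ * γ₂ * ξ3 t

namespace BackAndForth

/-- An element of the energy space, in terms of `u = ∂ₓv¹` and `v = v²`. -/
structure State where
  u : ℝ → ℝ
  v : ℝ → ℝ
  ξ : ℝ
  η : ℝ

/-- The energy inner product of two states. -/
noncomputable def pairing (ω γ : ℝ) (z w : State) : ℝ :=
  (∫ x in (0:ℝ)..1, (z.u x * w.u x + z.v x * w.v x)) + γ * (ω ^ 2 * (z.ξ * w.ξ) + z.η * w.η)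

/-- The space-time rectangle `[0,T] × [0,1]`. -/
abbrev rect (T : ℝ) : Set (ℝ × ℝ) := Icc 0 T ×ˢ Icc 0 1

/-- A classical solution on `[0,T]` of the wave system written in the variables `∂ₓv¹, v²`,
coupled to the oscillator with damping `g`. Backward strips become solutions with
damping `-γ₂` after reversing time. -/
structure IsStripSol (T g ω γ : ℝ) (z : ℝ → State) : Prop where
  smooth_u : ContDiffOn ℝ 1 (fun p : ℝ × ℝ => (z p.1).u p.2) (rect T)
  smooth_v : ContDiffOn ℝ 1 (fun p : ℝ × ℝ => (z p.1).v p.2) (rect T)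
  u_t : ∀ p ∈ rect T, fderivWithin ℝ (fun p : ℝ × ℝ => (z p.1).u p.2) (rect T) p (1, 0)
    = fderivWithin ℝ (fun p : ℝ × ℝ => (z p.1).v p.2) (rect T) p (0, 1)
  v_t : ∀ p ∈ rect T, fderivWithin ℝ (fun p : ℝ × ℝ => (z p.1).v p.2) (rect T) p (1, 0)
    = fderivWithin ℝ (fun p : ℝ × ℝ => (z p.1).u p.2) (rect T) p (0, 1)
  v_right : ∀ t ∈ Icc 0 T, (z t).v 1 = 0
  v_left : ∀ t ∈ Icc 0 T, (z t).v 0 = γ * (z t).η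
  ξ_deriv : ∀ t ∈ Icc 0 T,
    HasDerivWithinAt (fun s => (z s).ξ) ((z t).η - g * (z t).ξ) (Icc 0 T) t
  η_deriv : ∀ t ∈ Icc 0 T,
    HasDerivWithinAt (fun s => (z s).η) (-ω ^ 2 * (z t).ξ + (z t).u 0) (Icc 0 T) t

lemma pairing_comm (ω γ : ℝ) (z w : State) : pairing ω γ z w = pairing ω γ w z := by
  simp only [pairing, mul_comm]

lemma uniqueDiffOn_rect {T : ℝ} (hT : 0 < T) : UniqueDiffOn ℝ (rect T) :=
  (uniqueDiffOn_Icc hT).prod (uniqueDiffOn_Icc one_pos)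

lemma continuousOn_left {T : ℝ} {f : ℝ × ℝ → ℝ} (hf : ContinuousOn f (rect T)) {x : ℝ}
    (hx : x ∈ Icc (0:ℝ) 1) : ContinuousOn (fun t => f (t, x)) (Icc 0 T) :=
  hf.comp (by fun_prop) fun _ ht => ⟨ht, hx⟩

lemma continuousOn_right {T : ℝ} {f : ℝ × ℝ → ℝ} (hf : ContinuousOn f (rect T)) {t : ℝ}
    (ht : t ∈ Icc 0 T) : ContinuousOn (fun x => f (t, x)) (Icc 0 1) :=
  hf.comp (by fun_prop) fun _ hx => ⟨ht, hx⟩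

lemma intervalIntegrable_of_continuousOn_Icc {f : ℝ → ℝ} {a b : ℝ} (hab : a ≤ b)
    (hf : ContinuousOn f (Icc a b)) : IntervalIntegrable f volume a b :=
  ContinuousOn.intervalIntegrable (by rwa [uIcc_of_le hab])

namespace IsStripSol

variable {T g g' ω γ : ℝ} {z w : ℝ → State}

lemma cont_u (hz : IsStripSol T g ω γ z) {t : ℝ} (ht : t ∈ Icc 0 T) :
    ContinuousOn (z t).u (Icc 0 1) :=
  continuousOn_right hz.smooth_u.continuousOn ht

lemma cont_v (hz : IsStripSol T g ω γ z) {t : ℝ} (ht : t ∈ Icc 0 T) :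
    ContinuousOn (z t).v (Icc 0 1) :=
  continuousOn_right hz.smooth_v.continuousOn ht

lemma cont_u_zero (hz : IsStripSol T g ω γ z) : ContinuousOn (fun t => (z t).u 0) (Icc 0 T) :=
  continuousOn_left hz.smooth_u.continuousOn ⟨le_rfl, zero_le_one⟩

lemma cont_ξ (hz : IsStripSol T g ω γ z) : ContinuousOn (fun t => (z t).ξ) (Icc 0 T) :=
  fun t ht => (hz.ξ_deriv t ht).continuousWithinAt

lemma cont_η (hz : IsStripSol T g ω γ z) : ContinuousOn (fun t => (z t).η) (Icc 0 T) :=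
  fun t ht => (hz.η_deriv t ht).continuousWithinAt

/-- The flux identity for the wave part of the energy pairing. -/
lemma integral_flux (hz : IsStripSol T g ω γ z) (hw : IsStripSol T g' ω γ w) {t : ℝ}
    (ht : t ∈ Icc 0 T) :
    (∫ x in (0:ℝ)..1, ((z t).u x * (w t).u x + (z t).v x * (w t).v x))
      - (∫ x in (0:ℝ)..1, ((z 0).u x * (w 0).u x + (z 0).v x * (w 0).v x))
      = -γ * ∫ s in (0:ℝ)..t, ((z s).u 0 * (w s).η + (z s).η * (w s).u 0) := by
  set U := fun p : ℝ × ℝ => (z p.1).u p.2 with hU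
  set V := fun p : ℝ × ℝ => (z p.1).v p.2 with hV
  set U' := fun p : ℝ × ℝ => (w p.1).u p.2 with hU'
  set V' := fun p : ℝ × ℝ => (w p.1).v p.2 with hV'
  have hsub : Icc 0 t ×ˢ Icc (0:ℝ) 1 ⊆ rect T :=
    prod_mono (Icc_subset_Icc_right ht.2) le_rfl
  have hd : ∀ f : ℝ × ℝ → ℝ, ContDiffOn ℝ 1 f (rect T) →
      ∀ p ∈ Ioo 0 t ×ˢ Ioo (0:ℝ) 1, HasFDerivAt f (fderivWithin ℝ f (rect T) p) p := by
    intro f hf p hp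
    have hmem : rect T ∈ nhds p :=
      prod_mem_nhds (Icc_mem_nhds hp.1.1 (hp.1.2.trans_le ht.2)) (Icc_mem_nhds hp.2.1 hp.2.2)
    exact ((hf.differentiableOn one_ne_zero) p (mem_of_mem_nhds hmem)).hasFDerivWithinAt.hasFDerivAt
      hmem
  have hzero : ∀ p ∈ Icc 0 t ×ˢ Icc (0:ℝ) 1,
      (U p • fderivWithin ℝ U' (rect T) p + U' p • fderivWithin ℝ U (rect T) p
        + (V p • fderivWithin ℝ V' (rect T) p + V' p • fderivWithin ℝ V (rect T) p)) (1, 0)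
      + (-(U p • fderivWithin ℝ V' (rect T) p + V' p • fderivWithin ℝ U (rect T) p
        + (V p • fderivWithin ℝ U' (rect T) p + U' p • fderivWithin ℝ V (rect T) p))) (0, 1)
      = 0 := by
    intro p hp
    simp only [add_apply, neg_apply, smul_apply,
      smul_eq_mul, hz.u_t p (hsub hp), hz.v_t p (hsub hp), hw.u_t p (hsub hp), hw.v_t p (hsub hp),
      hU, hV, hU', hV']
    ring
  have huI : uIcc 0 t ×ˢ uIcc (0:ℝ) 1 = Icc 0 t ×ˢ Icc (0:ℝ) 1 := by
    rw [uIcc_of_le ht.1, uIcc_of_le zero_le_one]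
  have cU := hz.smooth_u.continuousOn.mono hsub
  have cV := hz.smooth_v.continuousOn.mono hsub
  have cU' := hw.smooth_u.continuousOn.mono hsub
  have cV' := hw.smooth_v.continuousOn.mono hsub
  have key := MeasureTheory.integral2_divergence_prod_of_hasFDerivAt_off_countable
    (fun p => U p * U' p + V p * V' p) (fun p => -(U p * V' p + V p * U' p))
    (fun p => U p • fderivWithin ℝ U' (rect T) p + U' p • fderivWithin ℝ U (rect T) p
        + (V p • fderivWithin ℝ V' (rect T) p + V' p • fderivWithin ℝ V (rect T) p))
    (fun p => -(U p • fderivWithin ℝ V' (rect T) p + V' p • fderivWithin ℝ U (rect T) p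
        + (V p • fderivWithin ℝ U' (rect T) p + U' p • fderivWithin ℝ V (rect T) p)))
    0 0 t 1 ∅ countable_empty
    (by rw [huI]; exact (cU.mul cU').add (cV.mul cV'))
    (by rw [huI]; exact ((cU.mul cV').add (cV.mul cU')).neg)
    (by
      rw [min_eq_left ht.1, max_eq_right ht.1, min_eq_left zero_le_one, max_eq_right zero_le_one,
        sdiff_empty]
      intro p hp
      exact ((hd U hz.smooth_u p hp).mul (hd U' hw.smooth_u p hp)).add
        ((hd V hz.smooth_v p hp).mul (hd V' hw.smooth_v p hp)))
    (by
      rw [min_eq_left ht.1, max_eq_right ht.1, min_eq_left zero_le_one, max_eq_right zero_le_one,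
        sdiff_empty]
      intro p hp
      exact (((hd U hz.smooth_u p hp).mul (hd V' hw.smooth_v p hp)).add
        ((hd V hz.smooth_v p hp).mul (hd U' hw.smooth_u p hp))).neg)
    (by
      rw [huI]
      exact (integrableOn_congr_fun hzero (measurableSet_Icc.prod measurableSet_Icc)).2
        integrableOn_zero)
  have hlhs : (∫ s in (0:ℝ)..t, ∫ x in (0:ℝ)..1,
      ((U (s, x) • fderivWithin ℝ U' (rect T) (s, x) + U' (s, x) • fderivWithin ℝ U (rect T) (s, x)
        + (V (s, x) • fderivWithin ℝ V' (rect T) (s, x)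
          + V' (s, x) • fderivWithin ℝ V (rect T) (s, x))) (1, 0)
      + (-(U (s, x) • fderivWithin ℝ V' (rect T) (s, x)
          + V' (s, x) • fderivWithin ℝ U (rect T) (s, x)
        + (V (s, x) • fderivWithin ℝ U' (rect T) (s, x)
          + U' (s, x) • fderivWithin ℝ V (rect T) (s, x)))) (0, 1))) = 0 := by
    refine (intervalIntegral.integral_congr (g := fun _ => (0:ℝ)) fun s hs => ?_).trans
      intervalIntegral.integral_zero
    rw [uIcc_of_le ht.1] at hs
    refine (intervalIntegral.integral_congr (g := fun _ => (0:ℝ)) fun x hx => ?_).trans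
      intervalIntegral.integral_zero
    rw [uIcc_of_le zero_le_one] at hx
    exact hzero (s, x) ⟨hs, hx⟩
  rw [hlhs] at key
  have h1 : (∫ s in (0:ℝ)..t, -(U (s, 1) * V' (s, 1) + V (s, 1) * U' (s, 1))) = 0 := by
    refine (intervalIntegral.integral_congr (g := fun _ => (0:ℝ)) fun s hs => ?_).trans
      intervalIntegral.integral_zero
    rw [uIcc_of_le ht.1] at hs
    have hs' : s ∈ Icc 0 T := ⟨hs.1, hs.2.trans ht.2⟩
    simp [hV, hV', hz.v_right s hs', hw.v_right s hs']
  have h0 : (∫ s in (0:ℝ)..t, -(U (s, 0) * V' (s, 0) + V (s, 0) * U' (s, 0)))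
      = -γ * ∫ s in (0:ℝ)..t, ((z s).u 0 * (w s).η + (z s).η * (w s).u 0) := by
    rw [← intervalIntegral.integral_const_mul]
    refine intervalIntegral.integral_congr fun s hs => ?_
    rw [uIcc_of_le ht.1] at hs
    have hs' : s ∈ Icc 0 T := ⟨hs.1, hs.2.trans ht.2⟩
    simp only [hU, hU', hV, hV', hz.v_left s hs', hw.v_left s hs']
    ring
  rw [h1, h0] at key
  simp only [hU, hU', hV, hV'] at key
  linarith

/-- The energy pairing of two solutions changes only through the damping terms. -/
theorem pairing_sub (hz : IsStripSol T g ω γ z) (hw : IsStripSol T g' ω γ w) {t : ℝ}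
    (ht : t ∈ Icc 0 T) :
    pairing ω γ (z t) (w t) - pairing ω γ (z 0) (w 0)
      = -(γ * ω ^ 2 * (g + g')) * ∫ s in (0:ℝ)..t, (z s).ξ * (w s).ξ := by
  have hsub : Icc 0 t ⊆ Icc 0 T := Icc_subset_Icc_right ht.2
  have c1 : ContinuousOn (fun s => (z s).u 0 * (w s).η + (z s).η * (w s).u 0) (Icc 0 t) :=
    ((hz.cont_u_zero.mul hw.cont_η).add (hz.cont_η.mul hw.cont_u_zero)).mono hsub
  have c2 : ContinuousOn (fun s => (z s).ξ * (w s).ξ) (Icc 0 t) :=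
    (hz.cont_ξ.mul hw.cont_ξ).mono hsub
  have i1 := intervalIntegrable_of_continuousOn_Icc ht.1 c1
  have i2 := intervalIntegrable_of_continuousOn_Icc ht.1 c2
  have ftc := intervalIntegral.integral_eq_sub_of_hasDerivAt_of_le ht.1
    (f := fun s => ω ^ 2 * ((z s).ξ * (w s).ξ) + (z s).η * (w s).η)
    (f' := fun s => -(ω ^ 2 * (g + g')) * ((z s).ξ * (w s).ξ)
      + ((z s).u 0 * (w s).η + (z s).η * (w s).u 0))
    (((continuousOn_const.mul (hz.cont_ξ.mul hw.cont_ξ)).add (hz.cont_η.mul hw.cont_η)).mono hsub)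
    (by
      intro s hs
      have hs' : s ∈ Icc 0 T := hsub (Ioo_subset_Icc_self hs)
      have hm : Icc 0 T ∈ nhds s := Icc_mem_nhds hs.1 (hs.2.trans_le ht.2)
      have a1 := (hz.ξ_deriv s hs').hasDerivAt hm
      have a2 := (hw.ξ_deriv s hs').hasDerivAt hm
      have a3 := (hz.η_deriv s hs').hasDerivAt hm
      have a4 := (hw.η_deriv s hs').hasDerivAt hm
      refine (((a1.mul a2).const_mul (ω ^ 2)).add (a3.mul a4)).congr_deriv ?_
      ring)
    ((i2.const_mul _).add i1)
  rw [intervalIntegral.integral_add (i2.const_mul _) i1,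
    intervalIntegral.integral_const_mul] at ftc
  have flux := hz.integral_flux hw ht
  simp only [pairing]
  linear_combination flux - γ * ftc

/-- The Riemann invariant `v + u` is constant along left-moving characteristics. -/
lemma add_eq_boundary (hz : IsStripSol T g ω γ z) (hT : 2 ≤ T) {x : ℝ} (hx : x ∈ Icc (0:ℝ) 1) :
    (z 1).v x + (z 1).u x = (z (1 + x)).v 0 + (z (1 + x)).u 0 := by
  set P := fun p : ℝ × ℝ => (z p.1).v p.2 + (z p.1).u p.2 with hP
  have hmaps : MapsTo (fun s : ℝ => (1 + s, x - s)) (Icc 0 x) (rect T) := fun s hs =>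
    ⟨⟨by linarith [hs.1], by linarith [hs.2, hx.2]⟩, ⟨by linarith [hs.2], by linarith [hs.1, hx.2]⟩⟩
  have hder : ∀ s ∈ Icc 0 x, HasDerivWithinAt (fun s : ℝ => P (1 + s, x - s)) 0 (Icc 0 x) s := by
    intro s hs
    have hp := hmaps hs
    have hPd := ((hz.smooth_v.differentiableOn one_ne_zero) _ hp).hasFDerivWithinAt.add
      ((hz.smooth_u.differentiableOn one_ne_zero) _ hp).hasFDerivWithinAt
    have hc : HasDerivWithinAt (fun s : ℝ => (1 + s, x - s)) ((1:ℝ), (-1:ℝ)) (Icc 0 x) s :=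
      ((hasDerivAt_id s).const_add 1 |>.prodMk ((hasDerivAt_id s).const_sub x)).hasDerivWithinAt
    refine (hPd.comp_hasDerivWithinAt s hc hmaps).congr_deriv ?_
    have e : ((1:ℝ), (-1:ℝ)) = (1, 0) - (0, 1) := by simp
    rw [e, map_sub, add_apply, add_apply, hz.u_t _ hp, hz.v_t _ hp]
    ring
  have hconst := constant_of_derivWithin_zero (f := fun s : ℝ => P (1 + s, x - s))
    (fun s hs => (hder s hs).differentiableWithinAt)
    (fun s hs => (hder s (Ico_subset_Icc_self hs)).derivWithin
      (uniqueDiffOn_Icc (hs.1.trans_lt hs.2) s (Ico_subset_Icc_self hs))) x ⟨hx.1, le_rfl⟩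
  simp only [hP, sub_self, sub_zero, add_zero] at hconst
  exact hconst.symm

/-- The Riemann invariant `v - u` is constant along right-moving characteristics. -/
lemma sub_eq_boundary (hz : IsStripSol T g ω γ z) (hT : 2 ≤ T) {x : ℝ} (hx : x ∈ Icc (0:ℝ) 1) :
    (z 1).v x - (z 1).u x = (z (1 - x)).v 0 - (z (1 - x)).u 0 := by
  set P := fun p : ℝ × ℝ => (z p.1).v p.2 - (z p.1).u p.2 with hP
  have hmaps : MapsTo (fun s : ℝ => (1 - s, x - s)) (Icc 0 x) (rect T) := fun s hs =>
    ⟨⟨by linarith [hs.2, hx.2], by linarith [hs.1]⟩, ⟨by linarith [hs.2], by linarith [hs.1, hx.2]⟩⟩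
  have hder : ∀ s ∈ Icc 0 x, HasDerivWithinAt (fun s : ℝ => P (1 - s, x - s)) 0 (Icc 0 x) s := by
    intro s hs
    have hp := hmaps hs
    have hPd := ((hz.smooth_v.differentiableOn one_ne_zero) _ hp).hasFDerivWithinAt.sub
      ((hz.smooth_u.differentiableOn one_ne_zero) _ hp).hasFDerivWithinAt
    have hc : HasDerivWithinAt (fun s : ℝ => (1 - s, x - s)) ((-1:ℝ), (-1:ℝ)) (Icc 0 x) s :=
      ((hasDerivAt_id s).const_sub 1 |>.prodMk ((hasDerivAt_id s).const_sub x)).hasDerivWithinAt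
    refine (hPd.comp_hasDerivWithinAt s hc hmaps).congr_deriv ?_
    have e : ((-1:ℝ), (-1:ℝ)) = -((1, 0) + (0, 1)) := by simp
    rw [e, map_neg, map_add, sub_apply, sub_apply, hz.u_t _ hp, hz.v_t _ hp]
    ring
  have hconst := constant_of_derivWithin_zero (f := fun s : ℝ => P (1 - s, x - s))
    (fun s hs => (hder s hs).differentiableWithinAt)
    (fun s hs => (hder s (Ico_subset_Icc_self hs)).derivWithin
      (uniqueDiffOn_Icc (hs.1.trans_lt hs.2) s (Ico_subset_Icc_self hs))) x ⟨hx.1, le_rfl⟩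
  simp only [hP, sub_self, sub_zero] at hconst
  exact hconst.symm

end IsStripSol

/-- An Agmon-type interpolation inequality on `[0,2]`. -/
lemma sq_le_add_integral_sq {f f' : ℝ → ℝ}
    (hf : ∀ t ∈ Icc (0:ℝ) 2, HasDerivWithinAt f (f' t) (Icc 0 2) t)
    (hf' : ContinuousOn f' (Icc 0 2)) {δ : ℝ} (hδ : 0 < δ) {t : ℝ} (ht : t ∈ Icc (0:ℝ) 2) :
    f t ^ 2 ≤ (1 + 1 / δ) * (∫ s in (0:ℝ)..2, f s ^ 2) + δ * ∫ s in (0:ℝ)..2, f' s ^ 2 := by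
  have h02 : (0:ℝ) ≤ 2 := by norm_num
  have hfc : ContinuousOn f (Icc 0 2) := fun s hs => (hf s hs).continuousWithinAt
  have i1 : IntervalIntegrable (fun s => f s ^ 2) volume 0 2 :=
    intervalIntegrable_of_continuousOn_Icc h02 (hfc.pow 2)
  have i2 : IntervalIntegrable (fun s => f' s ^ 2) volume 0 2 :=
    intervalIntegrable_of_continuousOn_Icc h02 (hf'.pow 2)
  have iH := (i1.const_mul (1 / δ)).add (i2.const_mul δ)
  obtain ⟨m, hm, hmin⟩ := isCompact_Icc.exists_isMinOn (nonempty_Icc.2 h02) (hfc.pow 2)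
  have hmean : 2 * f m ^ 2 ≤ ∫ s in (0:ℝ)..2, f s ^ 2 := by
    have := intervalIntegral.integral_mono_on h02 (by simp) i1 (f := fun _ => f m ^ 2)
      (fun s hs => hmin hs)
    simpa using this
  have hsubt : uIcc m t ⊆ Icc 0 2 := (convex_Icc (0:ℝ) 2).ordConnected.uIcc_subset hm ht
  have hcd : ContinuousOn (fun s => 2 * f s * f' s) (Icc 0 2) :=
    (continuousOn_const.mul hfc).mul hf'
  have ftc : ∫ s in m..t, 2 * f s * f' s = f t ^ 2 - f m ^ 2 := by
    refine intervalIntegral.integral_eq_sub_of_hasDeriv_right (f := fun s => f s ^ 2)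
      ((hfc.pow 2).mono hsubt) ?_ (hcd.mono hsubt).intervalIntegrable
    intro s hs
    have hs2 : s ∈ Ioo (0:ℝ) 2 :=
      ⟨(le_min hm.1 ht.1).trans_lt hs.1, hs.2.trans_le (max_le hm.2 ht.2)⟩
    have hd := (hf s (Ioo_subset_Icc_self hs2)).hasDerivAt (Icc_mem_nhds hs2.1 hs2.2)
    exact ((hd.pow 2).congr_deriv (by simp)).hasDerivWithinAt
  have hbound : |∫ s in m..t, 2 * f s * f' s|
      ≤ ∫ s in (0:ℝ)..2, (1 / δ * f s ^ 2 + δ * f' s ^ 2) := by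
    have hpt : ∀ s, |2 * f s * f' s| ≤ 1 / δ * f s ^ 2 + δ * f' s ^ 2 := by
      intro s
      have e1 : 1 / δ * f s ^ 2 + δ * f' s ^ 2 - 2 * f s * f' s = (f s - δ * f' s) ^ 2 / δ := by
        field_simp; ring
      have e2 : 1 / δ * f s ^ 2 + δ * f' s ^ 2 + 2 * f s * f' s = (f s + δ * f' s) ^ 2 / δ := by
        field_simp; ring
      have p1 : 0 ≤ (f s - δ * f' s) ^ 2 / δ := by positivity
      have p2 : 0 ≤ (f s + δ * f' s) ^ 2 / δ := by positivity
      rw [abs_le]; constructor <;> linarith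
    rw [← Real.norm_eq_abs]
    refine intervalIntegral.norm_integral_le_integral_norm_uIoc.trans ?_
    rw [intervalIntegral.integral_of_le h02]
    have hss : uIoc m t ⊆ Ioc 0 2 := by
      intro s hs
      rw [mem_uIoc] at hs
      rcases hs with hs | hs
      · exact ⟨hm.1.trans_lt hs.1, hs.2.trans ht.2⟩
      · exact ⟨ht.1.trans_lt hs.1, hs.2.trans hm.2⟩
    have iI := (intervalIntegrable_iff_integrableOn_Ioc_of_le h02).1 iH
    refine (setIntegral_mono_on ?_ (iI.mono_set hss) measurableSet_uIoc
      (fun s _ => hpt s)).trans (setIntegral_mono_set iI ?_ hss.eventuallyLE)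
    · have := (intervalIntegrable_iff_integrableOn_Ioc_of_le h02).1
        (intervalIntegrable_of_continuousOn_Icc h02 hcd)
      exact (this.mono_set hss).norm
    · exact Eventually.of_forall fun s => (abs_nonneg _).trans (hpt s)
  rw [ftc, intervalIntegral.integral_add (i1.const_mul _) (i2.const_mul _),
    intervalIntegral.integral_const_mul, intervalIntegral.integral_const_mul] at hbound
  have := (abs_le.1 hbound).2
  have hnn : 0 ≤ ∫ s in (0:ℝ)..2, f s ^ 2 :=
    intervalIntegral.integral_nonneg h02 fun s _ => sq_nonneg _
  linarith

/-- Uniform convergence to zero on `s`. -/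
def UnifVanishes (F : ℕ → ℝ → ℝ) (s : Set ℝ) : Prop :=
  ∀ ε > 0, ∀ᶠ n in atTop, ∀ t ∈ s, |F n t| ≤ ε

lemma UnifVanishes.comp {F : ℕ → ℝ → ℝ} {s s' : Set ℝ} (hF : UnifVanishes F s) {τ : ℝ → ℝ}
    (hτ : MapsTo τ s' s) : UnifVanishes (fun n t => F n (τ t)) s' := fun ε hε =>
  (hF ε hε).mono fun _ h t ht => h (τ t) (hτ ht)

lemma UnifVanishes.tendsto {F : ℕ → ℝ → ℝ} {s : Set ℝ} (hF : UnifVanishes F s) {t : ℝ}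
    (ht : t ∈ s) : Tendsto (fun n => F n t) atTop (nhds 0) := by
  rw [Metric.tendsto_nhds]
  intro ε hε
  filter_upwards [hF (ε / 2) (half_pos hε)] with n hn
  rw [Real.dist_eq, sub_zero]
  exact (hn t ht).trans_lt (half_lt_self hε)

lemma UnifVanishes.of_integral_sq {F F' : ℕ → ℝ → ℝ} {C : ℝ}
    (hF : ∀ n, ∀ t ∈ Icc (0:ℝ) 2, HasDerivWithinAt (F n) (F' n t) (Icc 0 2) t)
    (hF' : ∀ n, ContinuousOn (F' n) (Icc 0 2))
    (h0 : Tendsto (fun n => ∫ s in (0:ℝ)..2, F n s ^ 2) atTop (nhds 0))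
    (hC : ∀ n, ∫ s in (0:ℝ)..2, F' n s ^ 2 ≤ C) : UnifVanishes F (Icc 0 2) := by
  intro ε hε
  have hC0 : 0 ≤ C := (intervalIntegral.integral_nonneg (by norm_num)
    fun s _ => sq_nonneg (F' 0 s)).trans (hC 0)
  set δ := ε ^ 2 / (2 * (C + 1)) with hδ
  have hδ0 : 0 < δ := by positivity
  have hpos : 0 < ε ^ 2 / (2 * (1 + 1 / δ)) := by positivity
  filter_upwards [h0.eventually (gt_mem_nhds hpos)] with n hn t ht
  have key := sq_le_add_integral_sq (hF n) (hF' n) hδ0 ht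
  have b1 : (1 + 1 / δ) * (∫ s in (0:ℝ)..2, F n s ^ 2) ≤ ε ^ 2 / 2 := by
    have h1 : 0 < 1 + 1 / δ := by positivity
    calc _ ≤ (1 + 1 / δ) * (ε ^ 2 / (2 * (1 + 1 / δ))) := by gcongr
      _ = ε ^ 2 / 2 := by field_simp
  have b2 : δ * (∫ s in (0:ℝ)..2, F' n s ^ 2) ≤ ε ^ 2 / 2 := by
    calc _ ≤ δ * (C + 1) := by
          gcongr
          linarith [hC n]
      _ = ε ^ 2 / 2 := by rw [hδ]; field_simp
  exact abs_le_of_sq_le_sq (by linarith) hε.le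

/-- If `G` and `R` vanish uniformly, then `c G + G' + R` vanishes weakly against `C¹` functions. -/
lemma UnifVanishes.tendsto_integral_mul {G G' R : ℕ → ℝ → ℝ} {φ : ℝ → ℝ} (c : ℝ)
    (hG : ∀ n, ∀ t ∈ Icc (0:ℝ) 1, HasDerivWithinAt (G n) (G' n t) (Icc 0 1) t)
    (hG' : ∀ n, ContinuousOn (G' n) (Icc 0 1)) (hR : ∀ n, ContinuousOn (R n) (Icc 0 1))
    (hφ : ContDiffOn ℝ 1 φ (Icc 0 1))
    (hG0 : UnifVanishes G (Icc 0 1)) (hR0 : UnifVanishes R (Icc 0 1)) :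
    Tendsto (fun n => ∫ x in (0:ℝ)..1, (c * G n x + G' n x + R n x) * φ x) atTop (nhds 0) := by
  have h01 : (0:ℝ) ≤ 1 := zero_le_one
  set φ' := derivWithin φ (Icc 0 1) with hφ'
  have hφc := hφ.continuousOn
  have hφ'c : ContinuousOn φ' (Icc 0 1) :=
    hφ.continuousOn_derivWithin (uniqueDiffOn_Icc one_pos) le_rfl
  have hφd : ∀ x ∈ Icc (0:ℝ) 1, HasDerivWithinAt φ (φ' x) (Icc 0 1) x := fun x hx =>
    (hφ.differentiableOn one_ne_zero x hx).hasDerivWithinAt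
  obtain ⟨M, hM⟩ := isCompact_Icc.exists_bound_of_continuousOn hφc
  obtain ⟨M', hM'⟩ := isCompact_Icc.exists_bound_of_continuousOn hφ'c
  simp only [Real.norm_eq_abs] at hM hM'
  have hM0 : 0 ≤ M := (abs_nonneg _).trans (hM 0 ⟨le_rfl, h01⟩)
  have hM'0 : 0 ≤ M' := (abs_nonneg _).trans (hM' 0 ⟨le_rfl, h01⟩)
  have hparts : ∀ n, ∫ x in (0:ℝ)..1, (c * G n x + G' n x + R n x) * φ x
      = (G n 1 * φ 1 - G n 0 * φ 0)
        + ∫ x in (0:ℝ)..1, ((c * G n x + R n x) * φ x - G n x * φ' x) := by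
    intro n
    have hGc : ContinuousOn (G n) (Icc 0 1) := fun t ht => (hG n t ht).continuousWithinAt
    have ibp := intervalIntegral.integral_deriv_mul_eq_sub_of_hasDerivWithinAt (a := 0) (b := 1)
      (u := G n) (u' := G' n) (v := φ) (v' := φ') (by simpa using hG n) (by simpa using hφd)
      (intervalIntegrable_of_continuousOn_Icc h01 (hG' n))
      (intervalIntegrable_of_continuousOn_Icc h01 hφ'c)
    rw [← ibp, ← intervalIntegral.integral_add]
    · refine intervalIntegral.integral_congr fun x _ => ?_
      ring
    · exact intervalIntegrable_of_continuousOn_Icc h01 (((hG' n).mul hφc).add (hGc.mul hφ'c))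
    · exact intervalIntegrable_of_continuousOn_Icc h01
        ((((continuousOn_const.mul hGc).add (hR n)).mul hφc).sub (hGc.mul hφ'c))
  rw [Metric.tendsto_nhds]
  intro ε hε
  set A := 2 * M + ((|c| + 1) * M + M') + 1 with hA
  have hA0 : 0 < A := by positivity
  filter_upwards [hG0 (ε / (2 * A)) (by positivity), hR0 (ε / (2 * A)) (by positivity)] with n g r
  rw [Real.dist_eq, sub_zero, hparts n]
  set e := ε / (2 * A) with he
  have he0 : 0 < e := by positivity
  have b1 : |G n 1 * φ 1| ≤ e * M := by
    rw [abs_mul]; gcongr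
    exacts [g 1 (by simp), hM 1 (by simp)]
  have b0 : |G n 0 * φ 0| ≤ e * M := by
    rw [abs_mul]; gcongr
    exacts [g 0 (by simp), hM 0 (by simp)]
  have bI : |∫ x in (0:ℝ)..1, ((c * G n x + R n x) * φ x - G n x * φ' x)|
      ≤ (|c| * e + e) * M + e * M' := by
    have := intervalIntegral.norm_integral_le_of_norm_le_const (a := (0:ℝ)) (b := 1)
      (f := fun x => (c * G n x + R n x) * φ x - G n x * φ' x)
      (C := (|c| * e + e) * M + e * M') ?_
    · simpa using this
    intro x hx
    have hx' : x ∈ Icc (0:ℝ) 1 := by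
      rw [uIoc_of_le h01] at hx; exact Ioc_subset_Icc_self hx
    have q1 := g x hx'
    have q2 := r x hx'
    have q3 := hM x hx'
    have q4 := hM' x hx'
    rw [Real.norm_eq_abs]
    refine (abs_sub _ _).trans ?_
    rw [abs_mul, abs_mul]
    gcongr
    refine (abs_add_le _ _).trans ?_
    rw [abs_mul]
    gcongr
  calc |G n 1 * φ 1 - G n 0 * φ 0
        + ∫ x in (0:ℝ)..1, ((c * G n x + R n x) * φ x - G n x * φ' x)|
      ≤ (|G n 1 * φ 1| + |G n 0 * φ 0|)
        + |∫ x in (0:ℝ)..1, ((c * G n x + R n x) * φ x - G n x * φ' x)| :=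
        (abs_add_le _ _).trans (by gcongr; exact abs_sub _ _)
    _ ≤ (e * M + e * M) + ((|c| * e + e) * M + e * M') := by gcongr
    _ ≤ e * A := by rw [hA]; nlinarith
    _ = ε / 2 := by rw [he]; field_simp
    _ < ε := half_lt_self hε

lemma wave_energy_nonneg (z : State) :
    0 ≤ ∫ x in (0:ℝ)..1, (z.u x * z.u x + z.v x * z.v x) :=
  intervalIntegral.integral_nonneg zero_le_one fun _ _ =>
    add_nonneg (mul_self_nonneg _) (mul_self_nonneg _)

lemma pairing_self_nonneg {ω γ : ℝ} (hγ : 0 < γ) (z : State) : 0 ≤ pairing ω γ z z :=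
  add_nonneg (wave_energy_nonneg z) (by
    have := mul_self_nonneg z.ξ
    have := mul_self_nonneg z.η
    positivity)

lemma wave_energy_le_pairing {ω γ : ℝ} (hγ : 0 < γ) (z : State) :
    ∫ x in (0:ℝ)..1, (z.u x * z.u x + z.v x * z.v x) ≤ pairing ω γ z z := by
  refine le_add_of_nonneg_right ?_
  have := mul_self_nonneg z.ξ
  have := mul_self_nonneg z.η
  positivity

lemma sq_η_le {ω γ : ℝ} (hγ : 0 < γ) (z : State) : z.η ^ 2 ≤ pairing ω γ z z / γ := by
  rw [le_div_iff₀ hγ, pairing]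
  nlinarith [wave_energy_nonneg z, mul_nonneg hγ.le (mul_nonneg (sq_nonneg ω) (sq_nonneg z.ξ))]

lemma sq_ξ_le {ω γ : ℝ} (hω : ω ≠ 0) (hγ : 0 < γ) (z : State) :
    z.ξ ^ 2 ≤ pairing ω γ z z / (γ * ω ^ 2) := by
  rw [le_div_iff₀ (by positivity), pairing]
  nlinarith [wave_energy_nonneg z, mul_nonneg hγ.le (sq_nonneg z.η)]

namespace IsStripSol

variable {T g g' ω γ : ℝ} {z w : ℝ → State}

lemma integral_right_trace_sq_le (hz : IsStripSol T g ω γ z) (hT : 2 ≤ T) (hγ : 0 < γ) {K : ℝ}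
    (hK : ∀ t ∈ Icc 0 T, pairing ω γ (z t) (z t) ≤ K) :
    ∫ s in (0:ℝ)..2, (z s).u 0 ^ 2 ≤ 8 * K + 4 * γ * K := by
  have h01 : (0:ℝ) ≤ 1 := zero_le_one
  have h1T : (1:ℝ) ∈ Icc 0 T := ⟨h01, by linarith⟩
  have cu2 : ContinuousOn (fun s => (z s).u 0 ^ 2) (Icc 0 T) := hz.cont_u_zero.pow 2
  have hwave := (wave_energy_le_pairing (ω := ω) hγ (z 1)).trans (hK 1 h1T)
  have iw : IntervalIntegrable (fun x => (z 1).u x * (z 1).u x + (z 1).v x * (z 1).v x)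
      volume 0 1 :=
    intervalIntegrable_of_continuousOn_Icc h01
      (((hz.cont_u h1T).mul (hz.cont_u h1T)).add ((hz.cont_v h1T).mul (hz.cont_v h1T)))
  have hint : ∫ x in (0:ℝ)..1, (4 * ((z 1).u x * (z 1).u x + (z 1).v x * (z 1).v x) + 2 * γ * K)
      ≤ 4 * K + 2 * γ * K := by
    rw [intervalIntegral.integral_add (iw.const_mul 4) (by simp),
      intervalIntegral.integral_const_mul]
    simp only [intervalIntegral.integral_const, sub_zero, smul_eq_mul, one_mul]
    linarith
  have hη : ∀ t ∈ Icc 0 T, γ ^ 2 * (z t).η ^ 2 ≤ γ * K := by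
    intro t ht
    have h := (sq_η_le (ω := ω) hγ (z t)).trans (div_le_div_of_nonneg_right (hK t ht) hγ.le)
    calc γ ^ 2 * (z t).η ^ 2 ≤ γ ^ 2 * (K / γ) := by gcongr
      _ = γ * K := by field_simp
  have hright : ∫ x in (0:ℝ)..1, (z (1 + x)).u 0 ^ 2 ≤ 4 * K + 2 * γ * K := by
    refine (intervalIntegral.integral_mono_on h01 ?_ ((iw.const_mul 4).add (by simp)) ?_).trans hint
    · exact intervalIntegrable_of_continuousOn_Icc h01 (cu2.comp (f := fun x : ℝ => 1 + x)
        (by fun_prop) fun x hx => ⟨by linarith [hx.1], by linarith [hx.2]⟩)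
    · intro x hx
      have hm : 1 + x ∈ Icc 0 T := ⟨by linarith [hx.1], by linarith [hx.2]⟩
      have e := hz.add_eq_boundary hT hx
      rw [hz.v_left _ hm] at e
      have e' : (z (1 + x)).u 0 = (z 1).v x + (z 1).u x - γ * (z (1 + x)).η := by linarith
      rw [e']
      nlinarith [hη _ hm, sq_nonneg ((z 1).v x - (z 1).u x),
        sq_nonneg ((z 1).v x + (z 1).u x + γ * (z (1 + x)).η)]
  have hleft : ∫ x in (0:ℝ)..1, (z (1 - x)).u 0 ^ 2 ≤ 4 * K + 2 * γ * K := by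
    refine (intervalIntegral.integral_mono_on h01 ?_ ((iw.const_mul 4).add (by simp)) ?_).trans hint
    · exact intervalIntegrable_of_continuousOn_Icc h01 (cu2.comp (f := fun x : ℝ => 1 - x)
        (by fun_prop) fun x hx => ⟨by linarith [hx.2], by linarith [hx.1]⟩)
    · intro x hx
      have hm : 1 - x ∈ Icc 0 T := ⟨by linarith [hx.2], by linarith [hx.1]⟩
      have e := hz.sub_eq_boundary hT hx
      rw [hz.v_left _ hm] at e
      have e' : (z (1 - x)).u 0 = γ * (z (1 - x)).η - ((z 1).v x - (z 1).u x) := by linarith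
      rw [e']
      nlinarith [hη _ hm, sq_nonneg ((z 1).v x + (z 1).u x),
        sq_nonneg ((z 1).v x - (z 1).u x + γ * (z (1 - x)).η)]
  rw [intervalIntegral.integral_comp_add_left (fun s => (z s).u 0 ^ 2)] at hright
  rw [intervalIntegral.integral_comp_sub_left (fun s => (z s).u 0 ^ 2)] at hleft
  norm_num at hright hleft
  rw [← intervalIntegral.integral_add_adjacent_intervals (b := 1)
    (intervalIntegrable_of_continuousOn_Icc h01 (cu2.mono (Icc_subset_Icc_right (by linarith))))
    (intervalIntegrable_of_continuousOn_Icc one_le_two (cu2.mono (Icc_subset_Icc h01 hT)))]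
  linarith

end IsStripSol

section WeakConvergence

variable {T g g' ω γ K : ℝ} {z : ℕ → ℝ → State} {w : ℝ → State}

lemma unifVanishes_ξ (hz : ∀ n, IsStripSol T g ω γ (z n)) (hT : 2 ≤ T) (hω : ω ≠ 0) (hγ : 0 < γ)
    (hK : ∀ n, ∀ t ∈ Icc 0 T, pairing ω γ (z n t) (z n t) ≤ K)
    (hξ : Tendsto (fun n => ∫ s in (0:ℝ)..2, (z n s).ξ ^ 2) atTop (nhds 0)) :
    UnifVanishes (fun n s => (z n s).ξ) (Icc 0 2) := by
  have hsub : Icc (0:ℝ) 2 ⊆ Icc 0 T := Icc_subset_Icc_right hT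
  have hc : ∀ n, ContinuousOn (fun s => (z n s).η - g * (z n s).ξ) (Icc 0 2) := fun n =>
    ((hz n).cont_η.sub (continuousOn_const.mul (hz n).cont_ξ)).mono hsub
  refine UnifVanishes.of_integral_sq (F' := fun n s => (z n s).η - g * (z n s).ξ)
    (C := 2 * (2 * (K / γ) + 2 * g ^ 2 * (K / (γ * ω ^ 2))))
    (fun n t ht => ((hz n).ξ_deriv t (hsub ht)).mono hsub) hc hξ fun n => ?_
  have := intervalIntegral.integral_mono_on (a := (0:ℝ)) (b := 2) (by norm_num)
    (intervalIntegrable_of_continuousOn_Icc (by norm_num) ((hc n).pow 2))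
    (g := fun _ => 2 * (K / γ) + 2 * g ^ 2 * (K / (γ * ω ^ 2))) (by simp) ?_
  · simpa only [intervalIntegral.integral_const, sub_zero, smul_eq_mul, Pi.pow_apply] using this
  intro s hs
  have h1 := (sq_η_le (ω := ω) hγ (z n s)).trans
    (div_le_div_of_nonneg_right (hK n s (hsub hs)) hγ.le)
  have h2 := (sq_ξ_le hω hγ (z n s)).trans
    (div_le_div_of_nonneg_right (hK n s (hsub hs)) (by positivity))
  have h3 := mul_le_mul_of_nonneg_left h2 (sq_nonneg g)
  simp only [Pi.pow_apply]
  nlinarith [sq_nonneg ((z n s).η + g * (z n s).ξ)]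

lemma unifVanishes_η (hz : ∀ n, IsStripSol T g ω γ (z n)) (hT : 2 ≤ T) (hω : ω ≠ 0) (hγ : 0 < γ)
    (hK : ∀ n, ∀ t ∈ Icc 0 T, pairing ω γ (z n t) (z n t) ≤ K)
    (hξ : UnifVanishes (fun n s => (z n s).ξ) (Icc 0 2)) :
    UnifVanishes (fun n s => (z n s).η) (Icc 0 2) := by
  have h02 : (0:ℝ) ≤ 2 := by norm_num
  have hsub : Icc (0:ℝ) 2 ⊆ Icc 0 T := Icc_subset_Icc_right hT
  have hK0 : 0 ≤ K := (pairing_self_nonneg hγ _).trans (hK 0 0 ⟨le_rfl, by linarith⟩)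
  have cξ : ∀ n, ContinuousOn (fun s => (z n s).ξ) (Icc 0 2) := fun n => (hz n).cont_ξ.mono hsub
  have cη : ∀ n, ContinuousOn (fun s => (z n s).η) (Icc 0 2) := fun n => (hz n).cont_η.mono hsub
  have cu : ∀ n, ContinuousOn (fun s => (z n s).u 0) (Icc 0 2) := fun n =>
    (hz n).cont_u_zero.mono hsub
  have cη' : ∀ n, ContinuousOn (fun s => -ω ^ 2 * (z n s).ξ + (z n s).u 0) (Icc 0 2) := fun n =>
    (continuousOn_const.mul (cξ n)).add (cu n)
  have bη : ∀ n, ∀ s ∈ Icc (0:ℝ) 2, (z n s).η ^ 2 ≤ K / γ := fun n s hs =>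
    (sq_η_le (ω := ω) hγ (z n s)).trans (div_le_div_of_nonneg_right (hK n s (hsub hs)) hγ.le)
  have bξ : ∀ n, ∀ s ∈ Icc (0:ℝ) 2, (z n s).ξ ^ 2 ≤ K / (γ * ω ^ 2) := fun n s hs =>
    (sq_ξ_le hω hγ (z n s)).trans
      (div_le_div_of_nonneg_right (hK n s (hsub hs)) (by positivity))
  set C := 4 * ω ^ 4 * (K / (γ * ω ^ 2)) + 2 * (8 * K + 4 * γ * K) with hC
  have hC0 : 0 ≤ C := by positivity
  have bη' : ∀ n, ∫ s in (0:ℝ)..2, (-ω ^ 2 * (z n s).ξ + (z n s).u 0) ^ 2 ≤ C := by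
    intro n
    have iu : IntervalIntegrable (fun s => (z n s).u 0 ^ 2) volume 0 2 :=
      intervalIntegrable_of_continuousOn_Icc h02 ((cu n).pow 2)
    have := intervalIntegral.integral_mono_on h02
      (intervalIntegrable_of_continuousOn_Icc h02 ((cη' n).pow 2))
      (g := fun s => 2 * ω ^ 4 * (K / (γ * ω ^ 2)) + 2 * (z n s).u 0 ^ 2)
      ((by simp : IntervalIntegrable (fun _ => 2 * ω ^ 4 * (K / (γ * ω ^ 2))) volume 0 2).add
        (iu.const_mul 2)) (by
      intro s hs
      have h := mul_le_mul_of_nonneg_left (bξ n s hs) (by positivity : 0 ≤ 2 * ω ^ 4)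
      simp only [Pi.pow_apply]
      nlinarith [sq_nonneg (ω ^ 2 * (z n s).ξ + (z n s).u 0)])
    rw [intervalIntegral.integral_add (by simp) (iu.const_mul 2),
      intervalIntegral.integral_const, intervalIntegral.integral_const_mul] at this
    simp only [sub_zero, smul_eq_mul, Pi.pow_apply] at this
    have tr := (hz n).integral_right_trace_sq_le hT hγ (hK n)
    rw [hC]
    linarith
  refine UnifVanishes.of_integral_sq (F' := fun n s => -ω ^ 2 * (z n s).ξ + (z n s).u 0)
    (fun n t ht => ((hz n).η_deriv t (hsub ht)).mono hsub) cη' ?_ bη'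
  set A := 2 * (1 + K / γ) + (2 * (1 + g ^ 2 * (K / γ)) + C) with hA
  have hA0 : 0 < A := by positivity
  have main : ∀ n, ∀ ε > 0, (∀ t ∈ Icc (0:ℝ) 2, |(z n t).ξ| ≤ ε) →
      ∫ s in (0:ℝ)..2, (z n s).η ^ 2 ≤ ε * A := by
    intro n ε hε hn
    have iη' : IntervalIntegrable (fun s => (-ω ^ 2 * (z n s).ξ + (z n s).u 0) ^ 2) volume 0 2 :=
      intervalIntegrable_of_continuousOn_Icc h02 ((cη' n).pow 2)
    have iB : IntervalIntegrable (fun s => ε * ((1 + g ^ 2 * (K / γ))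
        + (-ω ^ 2 * (z n s).ξ + (z n s).u 0) ^ 2)) volume 0 2 :=
      ((by simp : IntervalIntegrable (fun _ => 1 + g ^ 2 * (K / γ)) volume 0 2).add
        iη').const_mul ε
    have c1 : ContinuousOn (fun s => (-ω ^ 2 * (z n s).ξ + (z n s).u 0) * (z n s).ξ
        + (z n s).η * ((z n s).η - g * (z n s).ξ)) (Icc 0 2) :=
      ((cη' n).mul (cξ n)).add ((cη n).mul ((cη n).sub (continuousOn_const.mul (cξ n))))
    have i1 := intervalIntegrable_of_continuousOn_Icc h02 c1
    have ibp := intervalIntegral.integral_eq_sub_of_hasDerivAt_of_le h02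
      (f := fun s => (z n s).η * (z n s).ξ) ((cη n).mul (cξ n))
      (fun s hs => by
        have hm : Icc 0 T ∈ nhds s := Icc_mem_nhds hs.1 (hs.2.trans_le hT)
        have hs' := hsub (Ioo_subset_Icc_self hs)
        exact (((hz n).η_deriv s hs').hasDerivAt hm).mul (((hz n).ξ_deriv s hs').hasDerivAt hm)) i1
    have hle : ∫ s in (0:ℝ)..2, (z n s).η ^ 2
        ≤ ∫ s in (0:ℝ)..2, (((-ω ^ 2 * (z n s).ξ + (z n s).u 0) * (z n s).ξ
          + (z n s).η * ((z n s).η - g * (z n s).ξ))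
          + ε * ((1 + g ^ 2 * (K / γ)) + (-ω ^ 2 * (z n s).ξ + (z n s).u 0) ^ 2)) := by
      refine intervalIntegral.integral_mono_on h02
        (intervalIntegrable_of_continuousOn_Icc h02 ((cη n).pow 2)) (i1.add iB) ?_
      intro s hs
      set b := -ω ^ 2 * (z n s).ξ + (z n s).u 0
      have h1 := hn s hs
      have h2 : (g * (z n s).η) ^ 2 ≤ g ^ 2 * (K / γ) := by
        rw [mul_pow]; exact mul_le_mul_of_nonneg_left (bη n s hs) (sq_nonneg g)
      have h3 : |g * (z n s).η - b| ≤ (1 + g ^ 2 * (K / γ)) + b ^ 2 := by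
        rw [abs_le]
        constructor <;>
          nlinarith [sq_nonneg (g * (z n s).η + 1), sq_nonneg (g * (z n s).η - 1),
            sq_nonneg (b + 1), sq_nonneg (b - 1)]
      have h4 : (z n s).ξ * (g * (z n s).η - b) ≤ ε * ((1 + g ^ 2 * (K / γ)) + b ^ 2) := by
        refine (le_abs_self _).trans ?_
        rw [abs_mul]
        gcongr
      nlinarith
    rw [intervalIntegral.integral_add i1 iB, ibp, intervalIntegral.integral_const_mul,
      intervalIntegral.integral_add (by simp) iη'] at hle
    simp only [intervalIntegral.integral_const, sub_zero, smul_eq_mul] at hle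
    have hb : ∀ t ∈ Icc (0:ℝ) 2, |(z n t).η * (z n t).ξ| ≤ ε * (1 + K / γ) := by
      intro t ht
      have h1 : |(z n t).η| ≤ 1 + K / γ := by
        rw [abs_le]
        constructor <;> nlinarith [bη n t ht, sq_nonneg ((z n t).η + 1), sq_nonneg ((z n t).η - 1)]
      rw [abs_mul, mul_comm]
      gcongr
      exact hn t ht
    have e2 := (abs_le.1 (hb 2 ⟨h02, le_rfl⟩)).2
    have e0 := (abs_le.1 (hb 0 ⟨le_rfl, h02⟩)).1
    have e3 := mul_le_mul_of_nonneg_left (bη' n) hε.le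
    rw [hA]
    linarith
  rw [Metric.tendsto_nhds]
  intro ε hε
  filter_upwards [hξ (ε / (2 * A)) (by positivity)] with n hn
  have hnn : 0 ≤ ∫ s in (0:ℝ)..2, (z n s).η ^ 2 :=
    intervalIntegral.integral_nonneg h02 fun s _ => sq_nonneg _
  rw [Real.dist_eq, sub_zero, abs_of_nonneg hnn]
  calc _ ≤ ε / (2 * A) * A := main n _ (by positivity) hn
    _ = ε / 2 := by field_simp
    _ < ε := half_lt_self hε

/-- Solutions of bounded energy whose observation `ξ` vanishes in `L²` tend weakly to zero,
when tested against classical solutions. -/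
theorem tendsto_pairing_zero (hz : ∀ n, IsStripSol T g ω γ (z n)) (hw : IsStripSol T g' ω γ w)
    (hT : 2 ≤ T) (hω : ω ≠ 0) (hγ : 0 < γ)
    (hK : ∀ n, ∀ t ∈ Icc 0 T, pairing ω γ (z n t) (z n t) ≤ K)
    (hξ : Tendsto (fun n => ∫ s in (0:ℝ)..2, (z n s).ξ ^ 2) atTop (nhds 0)) :
    Tendsto (fun n => pairing ω γ (z n 0) (w 0)) atTop (nhds 0) := by
  have h01 : (0:ℝ) ≤ 1 := zero_le_one
  have h1T : (1:ℝ) ∈ Icc 0 T := ⟨h01, by linarith⟩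
  have h12 : (1:ℝ) ∈ Icc (0:ℝ) 2 := ⟨h01, one_le_two⟩
  have uξ := unifVanishes_ξ hz hT hω hγ hK hξ
  have uη := unifVanishes_η hz hT hω hγ hK uξ
  have mT : MapsTo (fun x : ℝ => 1 + x) (Icc 0 1) (Icc 0 T) := fun x hx =>
    ⟨by linarith [hx.1], by linarith [hx.2]⟩
  have mT' : MapsTo (fun x : ℝ => 1 - x) (Icc 0 1) (Icc 0 T) := fun x hx =>
    ⟨by linarith [hx.2], by linarith [hx.1]⟩
  have m2 : MapsTo (fun x : ℝ => 1 + x) (Icc 0 1) (Icc 0 2) := fun x hx =>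
    ⟨by linarith [hx.1], by linarith [hx.2]⟩
  have m2' : MapsTo (fun x : ℝ => 1 - x) (Icc 0 1) (Icc 0 2) := fun x hx =>
    ⟨by linarith [hx.2], by linarith [hx.1]⟩
  have cc : ContinuousOn (fun x : ℝ => 1 + x) (Icc 0 1) := by fun_prop
  have cc' : ContinuousOn (fun x : ℝ => 1 - x) (Icc 0 1) := by fun_prop
  have sw : ∀ {f : ℝ × ℝ → ℝ}, ContDiffOn ℝ 1 f (rect T) →
      ContDiffOn ℝ 1 (fun x => f (1, x)) (Icc 0 1) := fun hf =>
    hf.comp (contDiff_const.prodMk contDiff_id).contDiffOn fun _ hx => ⟨h1T, hx⟩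
  have su := sw hw.smooth_u
  have sv := sw hw.smooth_v
  have hp : Tendsto (fun n => ∫ x in (0:ℝ)..1,
      ((z n 1).v x + (z n 1).u x) * ((w 1).v x + (w 1).u x)) atTop (nhds 0) := by
    have := UnifVanishes.tendsto_integral_mul (c := γ) (φ := fun x => (w 1).v x + (w 1).u x)
      (G := fun n x => (z n (1 + x)).η)
      (G' := fun n x => -ω ^ 2 * (z n (1 + x)).ξ + (z n (1 + x)).u 0)
      (R := fun n x => ω ^ 2 * (z n (1 + x)).ξ)
      (fun n x hx => by
        have hd := (hasDerivAt_id x).const_add 1 |>.hasDerivWithinAt (s := Icc 0 1)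
        refine (((hz n).η_deriv _ (mT hx)).comp x hd mT).congr_deriv ?_
        simp)
      (fun n => (continuousOn_const.mul ((hz n).cont_ξ.comp cc mT)).add
        ((hz n).cont_u_zero.comp cc mT))
      (fun n => continuousOn_const.mul ((hz n).cont_ξ.comp cc mT))
      (sv.add su) (uη.comp m2) (fun ε hε => by
        filter_upwards [uξ (ε / ω ^ 2) (by positivity)] with n hn x hx
        have := hn (1 + x) (m2 hx)
        rw [abs_mul, abs_of_nonneg (sq_nonneg ω)]
        rwa [le_div_iff₀' (by positivity)] at this)
    refine this.congr fun n => intervalIntegral.integral_congr fun x hx => ?_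
    rw [uIcc_of_le h01] at hx
    simp only [(hz n).add_eq_boundary hT hx, (hz n).v_left _ (mT hx)]
    ring
  have hq : Tendsto (fun n => ∫ x in (0:ℝ)..1,
      ((z n 1).v x - (z n 1).u x) * ((w 1).v x - (w 1).u x)) atTop (nhds 0) := by
    have := UnifVanishes.tendsto_integral_mul (c := γ) (φ := fun x => (w 1).v x - (w 1).u x)
      (G := fun n x => (z n (1 - x)).η)
      (G' := fun n x => -(-ω ^ 2 * (z n (1 - x)).ξ + (z n (1 - x)).u 0))
      (R := fun n x => -ω ^ 2 * (z n (1 - x)).ξ)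
      (fun n x hx => by
        have hd := (hasDerivAt_id x).const_sub 1 |>.hasDerivWithinAt (s := Icc 0 1)
        refine (((hz n).η_deriv _ (mT' hx)).comp x hd mT').congr_deriv ?_
        simp)
      (fun n => ((continuousOn_const.mul ((hz n).cont_ξ.comp cc' mT')).add
        ((hz n).cont_u_zero.comp cc' mT')).neg)
      (fun n => continuousOn_const.mul ((hz n).cont_ξ.comp cc' mT'))
      (sv.sub su) (uη.comp m2') (fun ε hε => by
        filter_upwards [uξ (ε / ω ^ 2) (by positivity)] with n hn x hx
        have := hn (1 - x) (m2' hx)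
        rw [abs_mul, abs_neg, abs_of_nonneg (sq_nonneg ω)]
        rwa [le_div_iff₀' (by positivity)] at this)
    refine this.congr fun n => intervalIntegral.integral_congr fun x hx => ?_
    rw [uIcc_of_le h01] at hx
    simp only [(hz n).sub_eq_boundary hT hx, (hz n).v_left _ (mT' hx)]
    ring
  have hwave : Tendsto (fun n => ∫ x in (0:ℝ)..1,
      ((z n 1).u x * (w 1).u x + (z n 1).v x * (w 1).v x)) atTop (nhds 0) := by
    have := (hp.add hq).const_mul (1 / 2)
    rw [add_zero, mul_zero] at this
    refine this.congr fun n => ?_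
    have cu := (hz n).cont_u h1T
    have cv := (hz n).cont_v h1T
    have cu' := hw.cont_u h1T
    have cv' := hw.cont_v h1T
    have i1 : IntervalIntegrable
        (fun x => ((z n 1).v x + (z n 1).u x) * ((w 1).v x + (w 1).u x)) volume 0 1 :=
      intervalIntegrable_of_continuousOn_Icc h01 ((cv.add cu).mul (cv'.add cu'))
    have i2 : IntervalIntegrable
        (fun x => ((z n 1).v x - (z n 1).u x) * ((w 1).v x - (w 1).u x)) volume 0 1 :=
      intervalIntegrable_of_continuousOn_Icc h01 ((cv.sub cu).mul (cv'.sub cu'))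
    rw [← intervalIntegral.integral_add i1 i2, ← intervalIntegral.integral_const_mul]
    refine intervalIntegral.integral_congr fun x _ => ?_
    ring
  have hone : Tendsto (fun n => pairing ω γ (z n 1) (w 1)) atTop (nhds 0) := by
    have t1 := ((uξ.tendsto h12).mul_const (w 1).ξ).const_mul (ω ^ 2)
    have t2 := (uη.tendsto h12).mul_const (w 1).η
    simpa [pairing] using hwave.add ((t1.add t2).const_mul γ)
  have hobs : Tendsto (fun n => ∫ s in (0:ℝ)..1, (z n s).ξ * (w s).ξ) atTop (nhds 0) := by
    have h1 : Icc (0:ℝ) 1 ⊆ Icc 0 T := Icc_subset_Icc_right h1T.2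
    obtain ⟨M, hM⟩ := isCompact_Icc.exists_bound_of_continuousOn (hw.cont_ξ.mono h1)
    have hM0 : 0 ≤ M := (norm_nonneg _).trans (hM 0 ⟨le_rfl, h01⟩)
    rw [Metric.tendsto_nhds]
    intro ε hε
    filter_upwards [uξ (ε / (2 * (M + 1))) (by positivity)] with n hn
    rw [dist_zero_right]
    have := intervalIntegral.norm_integral_le_of_norm_le_const (a := (0:ℝ)) (b := 1)
      (f := fun s => (z n s).ξ * (w s).ξ) (C := ε / (2 * (M + 1)) * (M + 1)) ?_
    · calc _ ≤ ε / (2 * (M + 1)) * (M + 1) := by simpa using this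
        _ = ε / 2 := by field_simp
        _ < ε := half_lt_self hε
    intro s hs
    rw [uIoc_of_le h01] at hs
    have hs' := Ioc_subset_Icc_self hs
    rw [norm_mul]
    gcongr
    · exact hn s ⟨hs'.1, hs'.2.trans one_le_two⟩
    · exact (hM s hs').trans (by linarith)
  have hfin := hone.add (hobs.const_mul (γ * ω ^ 2 * (g + g')))
  rw [mul_zero, add_zero] at hfin
  refine hfin.congr fun n => ?_
  linarith [(hz n).pairing_sub hw h1T]

end WeakConvergence

section PartialDerivatives

variable {s t : Set ℝ} {f : ℝ × ℝ → ℝ}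

lemma hasDerivWithinAt_left (hf : DifferentiableOn ℝ f (s ×ˢ t)) {a x : ℝ} (ha : a ∈ s)
    (hx : x ∈ t) :
    HasDerivWithinAt (fun r => f (r, x)) (fderivWithin ℝ f (s ×ˢ t) (a, x) (1, 0)) s a :=
  (hf (a, x) ⟨ha, hx⟩).hasFDerivWithinAt.comp_hasDerivWithinAt a
    ((hasDerivWithinAt_id a s).prodMk (hasDerivWithinAt_const a s x)) fun _ hr => mk_mem_prod hr hx

lemma hasDerivWithinAt_right (hf : DifferentiableOn ℝ f (s ×ˢ t)) {a x : ℝ} (ha : a ∈ s)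
    (hx : x ∈ t) :
    HasDerivWithinAt (fun y => f (a, y)) (fderivWithin ℝ f (s ×ˢ t) (a, x) (0, 1)) t x :=
  (hf (a, x) ⟨ha, hx⟩).hasFDerivWithinAt.comp_hasDerivWithinAt x
    ((hasDerivWithinAt_const x t a).prodMk (hasDerivWithinAt_id x t)) fun _ hy => mk_mem_prod ha hy

end PartialDerivatives

lemma rect_subset_closure_interior {T : ℝ} (hT : 0 < T) : rect T ⊆ closure (interior (rect T)) := by
  rw [interior_prod_eq, closure_prod_eq, interior_Icc, interior_Icc, closure_Ioo hT.ne,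
    closure_Ioo zero_ne_one]

/-- The state associated with a displacement, a velocity and the oscillator variables. -/
noncomputable def stateOf (w₁ w₂ : ℝ → ℝ → ℝ) (a b : ℝ → ℝ) (t : ℝ) : State where
  u := derivWithin (w₁ t) (Icc 0 1)
  v := w₂ t
  ξ := a t
  η := b t

lemma isStripSol_stateOf {T g ω γ : ℝ} (hT : 0 < T) {w₁ w₂ : ℝ → ℝ → ℝ} {a b c : ℝ → ℝ}
    (smooth₁ : ContDiffOn ℝ 2 (Function.uncurry w₁) (rect T))
    (smooth₂ : ContDiffOn ℝ 1 (Function.uncurry w₂) (rect T))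
    (deriv₁ : ∀ t ∈ Icc 0 T, ∀ x ∈ Icc (0:ℝ) 1,
      HasDerivWithinAt (fun s => w₁ s x) (w₂ t x) (Icc 0 T) t)
    (deriv₂ : ∀ t ∈ Icc 0 T, ∀ x ∈ Icc (0:ℝ) 1,
      HasDerivWithinAt (fun s => w₂ s x)
        (derivWithin (derivWithin (w₁ t) (Icc 0 1)) (Icc 0 1) x) (Icc 0 T) t)
    (deriv_a : ∀ t ∈ Icc 0 T, HasDerivWithinAt a (b t - g * a t) (Icc 0 T) t)
    (deriv_b : ∀ t ∈ Icc 0 T,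
      HasDerivWithinAt b (-ω ^ 2 * a t + derivWithin (w₁ t) (Icc 0 1) 0) (Icc 0 T) t)
    (deriv_c : ∀ t ∈ Icc 0 T, HasDerivWithinAt c (g * a t) (Icc 0 T) t)
    (right : ∀ t ∈ Icc 0 T, w₁ t 1 = 0)
    (left : ∀ t ∈ Icc 0 T, w₁ t 0 = γ * (a t + c t)) :
    IsStripSol T g ω γ (stateOf w₁ w₂ a b) := by
  have hR := uniqueDiffOn_rect hT
  have h01 := uniqueDiffOn_Icc (zero_lt_one (α := ℝ))
  have h0T := uniqueDiffOn_Icc hT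
  set F := Function.uncurry w₁ with hF
  have dF := smooth₁.differentiableOn two_ne_zero
  have sF' : ContDiffOn ℝ 1 (fderivWithin ℝ F (rect T)) (rect T) :=
    smooth₁.fderivWithin hR (by norm_num)
  have dF' := sF'.differentiableOn one_ne_zero
  have u_eq : ∀ p ∈ rect T, (stateOf w₁ w₂ a b p.1).u p.2 = fderivWithin ℝ F (rect T) p (0, 1) :=
    fun p hp => (hasDerivWithinAt_right dF hp.1 hp.2).derivWithin (h01 _ hp.2)
  have v_eq : ∀ p ∈ rect T, w₂ p.1 p.2 = fderivWithin ℝ F (rect T) p (1, 0) := fun p hp =>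
    (h0T _ hp.1).eq_deriv _ (deriv₁ _ hp.1 _ hp.2) (hasDerivWithinAt_left dF hp.1 hp.2)
  have smooth_u : ContDiffOn ℝ 1 (fun p : ℝ × ℝ => (stateOf w₁ w₂ a b p.1).u p.2) (rect T) :=
    (sF'.clm_apply contDiffOn_const).congr u_eq
  have second : ∀ e : ℝ × ℝ, ∀ p ∈ rect T,
      HasFDerivWithinAt (fun p => fderivWithin ℝ F (rect T) p e)
        ((fderivWithin ℝ (fderivWithin ℝ F (rect T)) (rect T) p).flip e) (rect T) p := by
    intro e p hp
    simpa using (dF' p hp).hasFDerivWithinAt.clm_apply (hasFDerivWithinAt_const e p (rect T))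
  refine ⟨smooth_u, smooth₂, fun p hp => ?_, fun p hp => ?_, fun t ht => ?_, fun t ht => ?_,
    deriv_a, deriv_b⟩
  · have symm := (smooth₁ p hp).isSymmSndFDerivWithinAt (by simp) hR
      (rect_subset_closure_interior hT hp) hp
    rw [((second (0, 1) p hp).congr u_eq (u_eq p hp)).fderivWithin (hR p hp),
      show (fun p : ℝ × ℝ => (stateOf w₁ w₂ a b p.1).v p.2) = fun p => w₂ p.1 p.2 from rfl,
      ((second (1, 0) p hp).congr v_eq (v_eq p hp)).fderivWithin (hR p hp)]
    exact symm _ _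
  · have e1 := hasDerivWithinAt_left (smooth₂.differentiableOn one_ne_zero) hp.1 hp.2
    have e2 := hasDerivWithinAt_right (smooth_u.differentiableOn one_ne_zero) hp.1 hp.2
    exact ((h0T _ hp.1).eq_deriv _ e1 (deriv₂ _ hp.1 _ hp.2)).trans (e2.derivWithin (h01 _ hp.2))
  · exact (h0T t ht).eq_deriv _ (deriv₁ t ht 1 ⟨zero_le_one, le_rfl⟩)
      ((hasDerivWithinAt_const t _ (0:ℝ)).congr right (right t ht))
  · have e := (h0T t ht).eq_deriv _ (deriv₁ t ht 0 ⟨le_rfl, zero_le_one⟩)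
      ((((deriv_a t ht).add (deriv_c t ht)).const_mul γ).congr left (left t ht))
    rw [sub_add_cancel] at e
    exact e

/-- A strip of the back-and-forth system becomes a strip solution on `[0,T]` after an affine
change of time of slope `σ = ±1`. -/
lemma isStripSol_affine {T σ c ω γ₁ γ₂ : ℝ} (hT : 0 < T) (hσ : σ * σ = 1) {I : Set ℝ}
    (hI : MapsTo (fun s => c + σ * s) (Icc 0 T) I)
    {v₁ v₂ : ℝ → ℝ → ℝ} {ξ₁ ξ₂ ξ₃ : ℝ → ℝ}
    (smooth_v₁ : ContDiffOn ℝ 2 (Function.uncurry v₁) (I ×ˢ Icc (0:ℝ) 1))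
    (smooth_v₂ : ContDiffOn ℝ 2 (Function.uncurry v₂) (I ×ˢ Icc (0:ℝ) 1))
    (smooth_ξ₁ : ContDiffOn ℝ 1 ξ₁ I) (smooth_ξ₂ : ContDiffOn ℝ 1 ξ₂ I)
    (smooth_ξ₃ : ContDiffOn ℝ 1 ξ₃ I)
    (pde₁ : ∀ t ∈ I, ∀ x ∈ Icc (0:ℝ) 1, derivWithin (fun s => v₁ s x) I t = σ * v₂ t x)
    (pde₂ : ∀ t ∈ I, ∀ x ∈ Icc (0:ℝ) 1, derivWithin (fun s => v₂ s x) I t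
      = σ * derivWithin (derivWithin (v₁ t) (Icc 0 1)) (Icc 0 1) x)
    (ode₁ : ∀ t ∈ I, derivWithin ξ₁ I t = σ * ξ₂ t - γ₂ * ξ₁ t)
    (ode₂ : ∀ t ∈ I, derivWithin ξ₂ I t
      = σ * (-ω ^ 2 * ξ₁ t + derivWithin (v₁ t) (Icc 0 1) 0))
    (ode₃ : ∀ t ∈ I, derivWithin ξ₃ I t = ξ₁ t)
    (right : ∀ t ∈ I, v₁ t 1 = 0) (left : ∀ t ∈ I, v₁ t 0 = γ₁ * ξ₁ t + γ₁ * γ₂ * ξ₃ t) :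
    IsStripSol T (σ * γ₂) ω γ₁ (fun s => stateOf v₁ v₂ ξ₁ ξ₂ (c + σ * s)) := by
  have hτ : ∀ s, HasDerivWithinAt (fun s => c + σ * s) σ (Icc 0 T) s := fun s => by
    simpa using ((hasDerivWithinAt_id s (Icc 0 T)).const_mul σ).const_add c
  have comp : ∀ {f : ℝ → ℝ}, DifferentiableOn ℝ f I → ∀ s ∈ Icc 0 T,
      HasDerivWithinAt (fun s => f (c + σ * s)) (derivWithin f I (c + σ * s) * σ) (Icc 0 T) s :=
    fun hf s hs => ((hf _ (hI hs)).hasDerivWithinAt).comp s (hτ s) hI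
  have mR : MapsTo (fun p : ℝ × ℝ => (c + σ * p.1, p.2)) (rect T) (I ×ˢ Icc (0:ℝ) 1) :=
    fun p hp => ⟨hI hp.1, hp.2⟩
  have cR : ContDiffOn ℝ 2 (fun p : ℝ × ℝ => (c + σ * p.1, p.2)) (rect T) := by fun_prop
  have slice : ∀ {f : ℝ → ℝ → ℝ}, ContDiffOn ℝ 2 (Function.uncurry f) (I ×ˢ Icc (0:ℝ) 1) →
      ∀ x ∈ Icc (0:ℝ) 1, DifferentiableOn ℝ (fun s => f s x) I := fun hf x hx t ht =>
    (hasDerivWithinAt_left (hf.differentiableOn two_ne_zero) ht hx).differentiableWithinAt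
  refine isStripSol_stateOf (w₁ := fun s => v₁ (c + σ * s)) (w₂ := fun s => v₂ (c + σ * s))
    (a := fun s => ξ₁ (c + σ * s)) (b := fun s => ξ₂ (c + σ * s))
    (c := fun s => γ₂ * ξ₃ (c + σ * s)) hT (smooth_v₁.comp cR mR)
    ((smooth_v₂.comp cR mR).of_le one_le_two) ?_ ?_ ?_ ?_ ?_ ?_ ?_
  · intro s hs x hx
    refine (comp (slice smooth_v₁ x hx) s hs).congr_deriv ?_
    rw [pde₁ _ (hI hs) x hx]
    linear_combination v₂ (c + σ * s) x * hσ
  · intro s hs x hx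
    refine (comp (slice smooth_v₂ x hx) s hs).congr_deriv ?_
    rw [pde₂ _ (hI hs) x hx]
    linear_combination derivWithin (derivWithin (v₁ (c + σ * s)) (Icc 0 1)) (Icc 0 1) x * hσ
  · intro s hs
    refine (comp (smooth_ξ₁.differentiableOn one_ne_zero) s hs).congr_deriv ?_
    rw [ode₁ _ (hI hs)]
    linear_combination ξ₂ (c + σ * s) * hσ
  · intro s hs
    refine (comp (smooth_ξ₂.differentiableOn one_ne_zero) s hs).congr_deriv ?_
    rw [ode₂ _ (hI hs)]
    linear_combination
      (-ω ^ 2 * ξ₁ (c + σ * s) + derivWithin (v₁ (c + σ * s)) (Icc 0 1) 0) * hσ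
  · intro s hs
    refine ((comp (smooth_ξ₃.differentiableOn one_ne_zero) s hs).const_mul γ₂).congr_deriv ?_
    rw [ode₃ _ (hI hs)]
    ring
  · exact fun s hs => right _ (hI hs)
  · intro s hs
    rw [left _ (hI hs)]
    ring

section Solution

variable {T ω γ₁ γ₂ : ℝ} (S : BackAndForthSol T ω γ₁ γ₂)

/-- The state of a solution of the back-and-forth system at time `t`. -/
noncomputable def solState (t : ℝ) : State := stateOf S.v1 S.v2 S.ξ1 S.ξ2 t

lemma isStripSol_forward (hT : 0 < T) (n : ℕ) :
    IsStripSol T γ₂ ω γ₁ (fun s => solState S (2 * (n:ℝ) * T + s)) := by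
  have hI : MapsTo (fun s => 2 * (n:ℝ) * T + 1 * s) (Icc 0 T)
      (Icc (2 * (n:ℝ) * T) ((2 * (n:ℝ) + 1) * T)) := fun s hs =>
    ⟨by linarith [hs.1], by linarith [hs.2]⟩
  have hnn : Icc (2 * (n:ℝ) * T) ((2 * (n:ℝ) + 1) * T) ⊆ Ici 0 := fun t ht =>
    le_trans (by positivity) ht.1
  have h := isStripSol_affine hT (one_mul 1) hI (S.smooth_v1_fwd n) (S.smooth_v2_fwd n)
    (S.smooth_ξ1_fwd n) (S.smooth_ξ2_fwd n) (S.smooth_ξ3_fwd n)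
    (by simpa only [one_mul] using S.pde1_fwd n) (by simpa only [one_mul] using S.pde2_fwd n)
    (by simpa only [one_mul] using S.ode1_fwd n) (by simpa only [one_mul] using S.ode2_fwd n)
    (S.ode3_fwd n) (fun t ht => S.bc1 t (hnn ht)) (fun t ht => S.bc0 t (hnn ht))
  simpa only [one_mul, solState] using h

lemma isStripSol_backward (hT : 0 < T) (n : ℕ) :
    IsStripSol T (-γ₂) ω γ₁ (fun s => solState S ((2 * (n:ℝ) + 2) * T - s)) := by
  have hI : MapsTo (fun s => (2 * (n:ℝ) + 2) * T + -1 * s) (Icc 0 T)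
      (Icc ((2 * (n:ℝ) + 1) * T) ((2 * (n:ℝ) + 2) * T)) := fun s hs =>
    ⟨by linarith [hs.2], by linarith [hs.1]⟩
  have hnn : Icc ((2 * (n:ℝ) + 1) * T) ((2 * (n:ℝ) + 2) * T) ⊆ Ici 0 := fun t ht =>
    le_trans (by positivity) ht.1
  have h := isStripSol_affine (ω := ω) (γ₁ := γ₁) (γ₂ := γ₂) hT (by norm_num) hI
    (S.smooth_v1_bwd n) (S.smooth_v2_bwd n)
    (S.smooth_ξ1_bwd n) (S.smooth_ξ2_bwd n) (S.smooth_ξ3_bwd n)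
    (fun t ht x hx => by rw [S.pde1_bwd n t ht x hx]; ring)
    (fun t ht x hx => by rw [S.pde2_bwd n t ht x hx]; ring)
    (fun t ht => by rw [S.ode1_bwd n t ht]; ring)
    (fun t ht => by rw [S.ode2_bwd n t ht]; ring)
    (S.ode3_bwd n) (fun t ht => S.bc1 t (hnn ht)) (fun t ht => S.bc0 t (hnn ht))
  simpa only [neg_one_mul, ← sub_eq_add_neg, solState] using h

/-- The energy pairing between the states at times `2mT` and `2nT`. -/
noncomputable def gram (m n : ℕ) : ℝ :=
  pairing ω γ₁ (solState S (2 * (m:ℝ) * T)) (solState S (2 * (n:ℝ) * T))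

lemma pairing_forward (hT : 0 < T) (n : ℕ) {t : ℝ} (ht : t ∈ Icc 0 T) :
    pairing ω γ₁ (solState S (2 * (n:ℝ) * T + t)) (solState S (2 * (n:ℝ) * T + t))
      = gram S n n - 2 * γ₁ * ω ^ 2 * γ₂
        * ∫ s in (0:ℝ)..t, (solState S (2 * (n:ℝ) * T + s)).ξ ^ 2 := by
  have h := (isStripSol_forward S hT n).pairing_sub (isStripSol_forward S hT n) ht
  simp only [add_zero, ← sq] at h
  rw [gram]
  linear_combination h

lemma gram_succ_left (hT : 0 < T) (m n : ℕ) :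
    gram S (n + 1) m = pairing ω γ₁ (solState S ((2 * (n:ℝ) + 1) * T))
      (solState S ((2 * (m:ℝ) + 1) * T)) := by
  have h := (isStripSol_backward S hT n).pairing_sub (isStripSol_forward S hT m)
    (right_mem_Icc.2 hT.le)
  simp only [neg_add_cancel, mul_zero, neg_zero, zero_mul, sub_zero, add_zero] at h
  rw [gram, ← sub_eq_zero, ← neg_eq_zero, neg_sub]
  convert h using 5 <;> push_cast <;> ring

lemma gram_comm (m n : ℕ) : gram S m n = gram S n m := pairing_comm _ _ _ _

lemma gram_succ_comm (hT : 0 < T) (m n : ℕ) : gram S (n + 1) m = gram S n (m + 1) := by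
  rw [gram_comm S n, gram_succ_left S hT, gram_succ_left S hT, pairing_comm]

lemma gram_add (hT : 0 < T) (n k : ℕ) : gram S n k = gram S (n + k) 0 := by
  induction k generalizing n with
  | zero => rfl
  | succ k ih => rw [← gram_succ_comm S hT, ih, add_right_comm, add_assoc]

lemma integral_ξ_sq_nonneg (n : ℕ) {t : ℝ} (ht : 0 ≤ t) :
    0 ≤ ∫ s in (0:ℝ)..t, (solState S (2 * (n:ℝ) * T + s)).ξ ^ 2 :=
  intervalIntegral.integral_nonneg ht fun _ _ => sq_nonneg _

/-- Over a forward-backward cycle, the energy decreases at least by the observed quantity. -/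
lemma gram_succ_self_le (hT : 0 < T) (hγ₁ : 0 < γ₁) (hγ₂ : 0 < γ₂) (n : ℕ) :
    gram S (n + 1) (n + 1) ≤ gram S n n - 2 * γ₁ * ω ^ 2 * γ₂
        * ∫ s in (0:ℝ)..T, (solState S (2 * (n:ℝ) * T + s)).ξ ^ 2 := by
  have hTm := right_mem_Icc.2 hT.le
  have hb := isStripSol_backward S hT n
  have h := hb.pairing_sub hb hTm
  have hf := pairing_forward S hT n hTm
  have hnn : 0 ≤ ∫ s in (0:ℝ)..T, (solState S ((2 * (n:ℝ) + 2) * T - s)).ξ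
      * (solState S ((2 * (n:ℝ) + 2) * T - s)).ξ :=
    intervalIntegral.integral_nonneg hT.le fun _ _ => mul_self_nonneg _
  have e1 : 2 * ((n + 1 : ℕ) : ℝ) * T = (2 * (n:ℝ) + 2) * T := by push_cast; ring
  have e2 : (2 * (n:ℝ) + 2) * T - T = 2 * (n:ℝ) * T + T := by ring
  rw [e2, hf, sub_zero] at h
  rw [gram, e1]
  have : 0 ≤ γ₁ * ω ^ 2 * γ₂ := by positivity
  nlinarith [mul_nonneg this hnn]

theorem tendsto_gram_self (hT : 2 ≤ T) (hω : ω ≠ 0) (hγ₁ : 0 < γ₁) (hγ₂ : 0 < γ₂) :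
    Tendsto (fun n => gram S n n) atTop (nhds 0) := by
  have hT0 : 0 < T := by linarith
  have hc : 0 < 2 * γ₁ * ω ^ 2 * γ₂ := by positivity
  have anti : Antitone fun n => gram S n n := antitone_nat_of_succ_le fun n =>
    (gram_succ_self_le S hT0 hγ₁ hγ₂ n).trans
      (sub_le_self _ (mul_nonneg hc.le (integral_ξ_sq_nonneg S n hT0.le)))
  have conv := tendsto_atTop_ciInf anti
    ⟨0, by rintro _ ⟨n, rfl⟩; exact pairing_self_nonneg hγ₁ _⟩
  have hdiff := (conv.sub (conv.comp (tendsto_add_atTop_nat 1))).div_const (2 * γ₁ * ω ^ 2 * γ₂)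
  rw [sub_self, zero_div] at hdiff
  have hξ : Tendsto (fun n : ℕ => ∫ s in (0:ℝ)..2, (solState S (2 * (n:ℝ) * T + s)).ξ ^ 2)
      atTop (nhds 0) := by
    refine squeeze_zero (fun n => integral_ξ_sq_nonneg S n zero_le_two) (fun n => ?_) hdiff
    have hle : ∫ s in (0:ℝ)..2, (solState S (2 * (n:ℝ) * T + s)).ξ ^ 2
        ≤ ∫ s in (0:ℝ)..T, (solState S (2 * (n:ℝ) * T + s)).ξ ^ 2 :=
      intervalIntegral.integral_mono_interval le_rfl zero_le_two hT
        (Eventually.of_forall fun _ => sq_nonneg _)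
        (intervalIntegrable_of_continuousOn_Icc hT0.le
          ((isStripSol_forward S hT0 n).cont_ξ.pow 2))
    refine hle.trans ?_
    rw [le_div_iff₀' hc]
    simp only [Function.comp_apply]
    linarith [gram_succ_self_le S hT0 hγ₁ hγ₂ n]
  have weak := tendsto_pairing_zero (K := gram S 0 0) (isStripSol_forward S hT0)
    (isStripSol_forward S hT0 0) hT hω hγ₁ (fun n t ht => by
      rw [pairing_forward S hT0 n ht]
      exact (sub_le_self _ (mul_nonneg hc.le (integral_ξ_sq_nonneg S n ht.1))).trans
        (anti (Nat.zero_le n))) hξ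
  simp only [add_zero] at weak
  refine (weak.comp (tendsto_id.atTop_add_atTop tendsto_id)).congr
    fun n => ?_
  rw [gram_add S hT0 n n]
  rfl

end Solution

/-- Poincaré's inequality on `[0,1]` for functions vanishing at the right endpoint. -/
lemma sq_le_integral_sq_of_right_eq_zero {f f' : ℝ → ℝ}
    (hf : ∀ x ∈ Icc (0:ℝ) 1, HasDerivWithinAt f (f' x) (Icc 0 1) x)
    (hf' : ContinuousOn f' (Icc 0 1)) (h1 : f 1 = 0) {x : ℝ} (hx : x ∈ Icc (0:ℝ) 1) :
    f x ^ 2 ≤ ∫ y in (0:ℝ)..1, f' y ^ 2 := by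
  have hsub : Icc x 1 ⊆ Icc (0:ℝ) 1 := Icc_subset_Icc_left hx.1
  have i1 : IntervalIntegrable f' volume x 1 :=
    intervalIntegrable_of_continuousOn_Icc hx.2 (hf'.mono hsub)
  have i2 : IntervalIntegrable (fun y => f' y ^ 2) volume x 1 :=
    intervalIntegrable_of_continuousOn_Icc hx.2 ((hf'.pow 2).mono hsub)
  have i3 : IntervalIntegrable (fun y => f' y ^ 2) volume 0 1 :=
    intervalIntegrable_of_continuousOn_Icc zero_le_one (hf'.pow 2)
  have ftc := intervalIntegral.integral_eq_sub_of_hasDerivAt_of_le hx.2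
    (fun y hy => (hf y (hsub hy)).continuousWithinAt.mono hsub)
    (fun y hy => (hf y (hsub (Ioo_subset_Icc_self hy))).hasDerivAt
      (Icc_mem_nhds (hx.1.trans_lt hy.1) hy.2)) i1
  have mono : ∫ y in x..1, f' y ^ 2 ≤ ∫ y in (0:ℝ)..1, f' y ^ 2 :=
    intervalIntegral.integral_mono_interval hx.1 hx.2 le_rfl
      (Eventually.of_forall fun _ => sq_nonneg _) i3
  have hcs : 0 ≤ ∫ y in x..1, (f' y + f x) ^ 2 :=
    intervalIntegral.integral_nonneg hx.2 fun _ _ => sq_nonneg _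
  have expand : ∫ y in x..1, (f' y + f x) ^ 2
      = (∫ y in x..1, f' y ^ 2) + 2 * f x * (0 - f x) + (1 - x) * f x ^ 2 := by
    rw [← h1, ← ftc, ← intervalIntegral.integral_const_mul,
      ← intervalIntegral.integral_add i2 (i1.const_mul _), ← smul_eq_mul (1 - x),
      ← intervalIntegral.integral_const,
      ← intervalIntegral.integral_add (i2.add (i1.const_mul _)) (by simp)]
    refine intervalIntegral.integral_congr fun y _ => ?_
    ring
  nlinarith [mul_nonneg hx.1 (sq_nonneg (f x))]

end BackAndForth

/-- Theorem 2 of the paper, for classical solutions: for `T ≥ 2`,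
`ω ≠ 0` and positive gains `γ₁, γ₂`, any classical solution of the back-and-forth
periodic system converges to zero along the sequence of times `2nT`: the `H¹`-type
energy `∫₀¹(|v¹|² + |∂ₓv¹|²)dx` and `∫₀¹|v²|²dx` tend to `0`, and `ξ₁, ξ₂, ξ₃`
tend to `0` at the times `2nT`. -/
theorem back_and_forth_observer_convergence
    (T ω γ₁ γ₂ : ℝ) (hT : 2 ≤ T) (hω : ω ≠ 0) (hγ₁ : 0 < γ₁) (hγ₂ : 0 < γ₂)
    (S : BackAndForthSol T ω γ₁ γ₂) :
    Tendsto (fun n : ℕ =>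
        ∫ x in (0:ℝ)..1, ((S.v1 (2 * (n:ℝ) * T) x) ^ 2
          + (derivWithin (fun y => S.v1 (2 * (n:ℝ) * T) y) (Icc (0:ℝ) 1) x) ^ 2))
      atTop (nhds 0)
    ∧ Tendsto (fun n : ℕ => ∫ x in (0:ℝ)..1, (S.v2 (2 * (n:ℝ) * T) x) ^ 2)
        atTop (nhds 0)
    ∧ Tendsto (fun n : ℕ => S.ξ1 (2 * (n:ℝ) * T)) atTop (nhds 0)
    ∧ Tendsto (fun n : ℕ => S.ξ2 (2 * (n:ℝ) * T)) atTop (nhds 0)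
    ∧ Tendsto (fun n : ℕ => S.ξ3 (2 * (n:ℝ) * T)) atTop (nhds 0) := by
  have hT0 : 0 < T := by linarith
  have h0 : (0:ℝ) ∈ Icc 0 T := left_mem_Icc.2 hT0.le
  have energy := BackAndForth.tendsto_gram_self S hT hω hγ₁ hγ₂
  have strip := BackAndForth.isStripSol_forward S hT0
  have cu : ∀ n : ℕ, ContinuousOn (derivWithin (S.v1 (2 * (n:ℝ) * T)) (Icc 0 1)) (Icc 0 1) :=
    fun n => by
      simpa [BackAndForth.solState, BackAndForth.stateOf] using (strip n).cont_u h0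
  have cv : ∀ n : ℕ, ContinuousOn (S.v2 (2 * (n:ℝ) * T)) (Icc 0 1) :=
    fun n => by
      simpa [BackAndForth.solState, BackAndForth.stateOf] using (strip n).cont_v h0
  have iu : ∀ n : ℕ, IntervalIntegrable
      (fun x => derivWithin (S.v1 (2 * (n:ℝ) * T)) (Icc 0 1) x ^ 2) volume 0 1 := fun n =>
    BackAndForth.intervalIntegrable_of_continuousOn_Icc zero_le_one ((cu n).pow 2)
  have iv : ∀ n : ℕ, IntervalIntegrable (fun x => S.v2 (2 * (n:ℝ) * T) x ^ 2) volume 0 1 :=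
    fun n => BackAndForth.intervalIntegrable_of_continuousOn_Icc zero_le_one ((cv n).pow 2)
  have split : ∀ n : ℕ, (∫ x in (0:ℝ)..1, derivWithin (S.v1 (2 * (n:ℝ) * T)) (Icc 0 1) x ^ 2)
      + (∫ x in (0:ℝ)..1, S.v2 (2 * (n:ℝ) * T) x ^ 2) ≤ BackAndForth.gram S n n := by
    intro n
    rw [← intervalIntegral.integral_add (iu n) (iv n)]
    simp only [sq]
    exact BackAndForth.wave_energy_le_pairing hγ₁
      (BackAndForth.solState S (2 * (n:ℝ) * T))
  have nonneg_u : ∀ n : ℕ,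
      0 ≤ ∫ x in (0:ℝ)..1, derivWithin (S.v1 (2 * (n:ℝ) * T)) (Icc 0 1) x ^ 2 := fun n =>
    intervalIntegral.integral_nonneg zero_le_one fun _ _ => sq_nonneg _
  have nonneg_v : ∀ n : ℕ, 0 ≤ ∫ x in (0:ℝ)..1, S.v2 (2 * (n:ℝ) * T) x ^ 2 := fun n =>
    intervalIntegral.integral_nonneg zero_le_one fun _ _ => sq_nonneg _
  have hnT : ∀ n : ℕ, 2 * (n:ℝ) * T ∈ Ici (0:ℝ) := fun n => mem_Ici.2 (by positivity)
  have dv1 : ∀ n : ℕ, DifferentiableOn ℝ (S.v1 (2 * (n:ℝ) * T)) (Icc 0 1) := fun n x hx =>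
    (BackAndForth.hasDerivWithinAt_right ((S.smooth_v1_fwd n).differentiableOn two_ne_zero)
      (left_mem_Icc.2 (by linarith)) hx).differentiableWithinAt
  have sup : ∀ n : ℕ, ∀ x ∈ Icc (0:ℝ) 1,
      S.v1 (2 * (n:ℝ) * T) x ^ 2 ≤ BackAndForth.gram S n n := fun n x hx =>
    (BackAndForth.sq_le_integral_sq_of_right_eq_zero
      (fun y hy => (dv1 n y hy).hasDerivWithinAt) (cu n) (S.bc1 _ (hnT n)) hx).trans
      (by linarith [split n, nonneg_v n])
  have of_sq : ∀ {f : ℕ → ℝ} (C : ℝ), (∀ n, f n ^ 2 ≤ BackAndForth.gram S n n / C) →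
      Tendsto f atTop (nhds 0) := by
    intro f C hf
    have lim := energy.div_const C
    rw [zero_div] at lim
    have hsq := (squeeze_zero (fun n => sq_nonneg (f n)) hf lim).sqrt
    simp only [Real.sqrt_sq_eq_abs, Real.sqrt_zero] at hsq
    exact (tendsto_zero_iff_abs_tendsto_zero f).2 hsq
  have lim_ξ1 : Tendsto (fun n : ℕ => S.ξ1 (2 * (n:ℝ) * T)) atTop (nhds 0) :=
    of_sq (γ₁ * ω ^ 2) fun n => BackAndForth.sq_ξ_le hω hγ₁ (BackAndForth.solState S _)
  have lim_v1 : Tendsto (fun n : ℕ => S.v1 (2 * (n:ℝ) * T) 0) atTop (nhds 0) :=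
    of_sq 1 fun n => by simpa using sup n 0 ⟨le_rfl, zero_le_one⟩
  refine ⟨?_, ?_, lim_ξ1, ?_, ?_⟩
  · have lim := energy.add energy
    rw [add_zero] at lim
    refine squeeze_zero (fun n => intervalIntegral.integral_nonneg zero_le_one fun _ _ =>
      add_nonneg (sq_nonneg _) (sq_nonneg _)) (fun n => ?_) lim
    have i1 : IntervalIntegrable (fun x => S.v1 (2 * (n:ℝ) * T) x ^ 2) volume 0 1 :=
      BackAndForth.intervalIntegrable_of_continuousOn_Icc zero_le_one
        ((dv1 n).continuousOn.pow 2)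
    rw [intervalIntegral.integral_add i1 (iu n)]
    have bound := intervalIntegral.integral_mono_on zero_le_one i1
      (g := fun _ => BackAndForth.gram S n n) (by simp) (sup n)
    simp only [intervalIntegral.integral_const, sub_zero, one_smul] at bound
    linarith [split n, nonneg_v n]
  · exact squeeze_zero nonneg_v (fun n => by linarith [split n, nonneg_u n]) energy
  · exact of_sq γ₁ fun n => BackAndForth.sq_η_le hγ₁ (BackAndForth.solState S _)
  · have lim := (lim_v1.sub (lim_ξ1.const_mul γ₁)).div_const (γ₁ * γ₂)
    rw [mul_zero, sub_zero, zero_div] at lim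
    refine lim.congr fun n => ?_
    rw [S.bc0 _ (hnT n)]
    field_simp
    ring
end

section
/- Let T > 0, ω ∈ ℝ, and let q : [0,1] → ℝ be continuous. Let u : [0,T] × [0,1] → ℝ be of class C⁴ and satisfy ∂ₜₜu − ∂ₓₓu = q(x)·cos(ωt) on [0,T] × [0,1], u(t,0) = u(t,1) = 0 for all t ∈ [0,T], and u(0,x) = ∂ₜu(0,x) = 0 for all x ∈ [0,1]. Then the function W(t,x) := ω²·u(t,x) + ∂ₜₜu(t,x) satisfies: ∂ₜₜW = ∂ₓₓW on [0,T] × [0,1], W(t,0) = W(t,1) = 0 for all t ∈ [0,T], W(0,x) = q(x) and ∂ₜW(0,x) = 0 for all x ∈ [0,1]. (This is the key transformation in the proof of Proposition 2, moving the unknown source to the initial datum of a homogeneous wave equation.) -/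
open Set Filter MeasureTheory

/-- The partial derivative in the first variable. -/
noncomputable def partialFst (f : ℝ → ℝ → ℝ) : ℝ → ℝ → ℝ :=
  fun t x => deriv (fun s => f s x) t

/-- The partial derivative in the second variable. -/
noncomputable def partialSnd (f : ℝ → ℝ → ℝ) : ℝ → ℝ → ℝ :=
  fun t x => deriv (fun y => f t y) x

theorem partialFst_eq_fderiv {f : ℝ → ℝ → ℝ} (hf : Differentiable ℝ (Function.uncurry f))
    (t x : ℝ) : partialFst f t x = fderiv ℝ (Function.uncurry f) (t, x) (1, 0) :=
  (HasFDerivAt.comp_hasDerivAt (f := fun s => (s, x)) t (hf (t, x)).hasFDerivAt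
    ((hasDerivAt_id t).prodMk (hasDerivAt_const t x))).deriv

theorem partialSnd_eq_fderiv {f : ℝ → ℝ → ℝ} (hf : Differentiable ℝ (Function.uncurry f))
    (t x : ℝ) : partialSnd f t x = fderiv ℝ (Function.uncurry f) (t, x) (0, 1) :=
  (HasFDerivAt.comp_hasDerivAt (f := fun y => (t, y)) x (hf (t, x)).hasFDerivAt
    ((hasDerivAt_const x t).prodMk (hasDerivAt_id x))).deriv

theorem uncurry_partialFst {f : ℝ → ℝ → ℝ} (hf : Differentiable ℝ (Function.uncurry f)) :
    Function.uncurry (partialFst f) = fun p => fderiv ℝ (Function.uncurry f) p (1, 0) :=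
  funext fun p => partialFst_eq_fderiv hf p.1 p.2

theorem uncurry_partialSnd {f : ℝ → ℝ → ℝ} (hf : Differentiable ℝ (Function.uncurry f)) :
    Function.uncurry (partialSnd f) = fun p => fderiv ℝ (Function.uncurry f) p (0, 1) :=
  funext fun p => partialSnd_eq_fderiv hf p.1 p.2

theorem contDiff_partialFst {f : ℝ → ℝ → ℝ} {m n : WithTop ℕ∞} (hmn : m + 1 ≤ n)
    (hf : ContDiff ℝ n (Function.uncurry f)) :
    ContDiff ℝ m (Function.uncurry (partialFst f)) := by
  have hd : Differentiable ℝ (Function.uncurry f) :=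
    (hf.of_le (le_add_self.trans hmn)).differentiable one_ne_zero
  rw [uncurry_partialFst hd]
  exact (hf.fderiv_right hmn).clm_apply contDiff_const

theorem contDiff_partialSnd {f : ℝ → ℝ → ℝ} {m n : WithTop ℕ∞} (hmn : m + 1 ≤ n)
    (hf : ContDiff ℝ n (Function.uncurry f)) :
    ContDiff ℝ m (Function.uncurry (partialSnd f)) := by
  have hd : Differentiable ℝ (Function.uncurry f) :=
    (hf.of_le (le_add_self.trans hmn)).differentiable one_ne_zero
  rw [uncurry_partialSnd hd]
  exact (hf.fderiv_right hmn).clm_apply contDiff_const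

/-- Mixed partial derivatives of a `C²` function commute. -/
theorem partialFst_partialSnd_comm {f : ℝ → ℝ → ℝ} (hf : ContDiff ℝ 2 (Function.uncurry f)) :
    partialFst (partialSnd f) = partialSnd (partialFst f) := by
  have hd : Differentiable ℝ (Function.uncurry f) := hf.differentiable two_ne_zero
  have h12 : (1 : WithTop ℕ∞) + 1 ≤ 2 := one_add_one_eq_two.le
  have hd' : Differentiable ℝ (fderiv ℝ (Function.uncurry f)) :=
    (hf.fderiv_right h12).differentiable one_ne_zero
  have key : ∀ p v w : ℝ × ℝ, fderiv ℝ (fun p => fderiv ℝ (Function.uncurry f) p v) p w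
      = fderiv ℝ (fderiv ℝ (Function.uncurry f)) p w v := fun p v w => by
    rw [fderiv_clm_apply (hd' p) (differentiableAt_const v)]
    simp
  funext t x
  rw [partialFst_eq_fderiv ((contDiff_partialSnd h12 hf).differentiable one_ne_zero),
    partialSnd_eq_fderiv ((contDiff_partialFst h12 hf).differentiable one_ne_zero),
    uncurry_partialFst hd, uncurry_partialSnd hd, key, key]
  exact (hf.contDiffAt.isSymmSndFDerivAt (by simp)) _ _

theorem partialFst_const_mul_add {f g : ℝ → ℝ → ℝ} (c : ℝ)
    (hf : Differentiable ℝ (Function.uncurry f)) (hg : Differentiable ℝ (Function.uncurry g)) :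
    partialFst (fun t x => c * f t x + g t x)
      = fun t x => c * partialFst f t x + partialFst g t x := by
  funext t x
  have hf' : DifferentiableAt ℝ (fun s => f s x) t :=
    (hf (t, x)).comp t (f := fun s => (s, x)) (by fun_prop)
  have hg' : DifferentiableAt ℝ (fun s => g s x) t :=
    (hg (t, x)).comp t (f := fun s => (s, x)) (by fun_prop)
  exact ((hf'.hasDerivAt.const_mul c).add hg'.hasDerivAt).deriv

theorem partialSnd_const_mul_add {f g : ℝ → ℝ → ℝ} (c : ℝ)
    (hf : Differentiable ℝ (Function.uncurry f)) (hg : Differentiable ℝ (Function.uncurry g)) :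
    partialSnd (fun t x => c * f t x + g t x)
      = fun t x => c * partialSnd f t x + partialSnd g t x := by
  funext t x
  have hf' : DifferentiableAt ℝ (fun y => f t y) x :=
    (hf (t, x)).comp x (f := fun y => (t, y)) (by fun_prop)
  have hg' : DifferentiableAt ℝ (fun y => g t y) x :=
    (hg (t, x)).comp x (f := fun y => (t, y)) (by fun_prop)
  exact ((hf'.hasDerivAt.const_mul c).add hg'.hasDerivAt).deriv

/-- Two `C¹` functions that agree on a nondegenerate compact interval have the same derivative
there, endpoints included. -/
theorem ContDiff.eqOn_deriv_Icc {g h : ℝ → ℝ} {a b : ℝ} (hab : a < b) (hg : ContDiff ℝ 1 g)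
    (hh : ContDiff ℝ 1 h) (hgh : EqOn g h (Icc a b)) : EqOn (deriv g) (deriv h) (Icc a b) := by
  have hIoo : EqOn (deriv g) (deriv h) (Ioo a b) := fun t ht =>
    ((hgh.mono Ioo_subset_Icc_self).eventuallyEq_of_mem (Ioo_mem_nhds ht.1 ht.2)).deriv_eq
  have hcl := hIoo.closure hg.continuous_deriv_one hh.continuous_deriv_one
  rwa [closure_Ioo hab.ne] at hcl

theorem ContDiff.eqOn_deriv_deriv_Icc {g h : ℝ → ℝ} {a b : ℝ} (hab : a < b)
    (hg : ContDiff ℝ 2 g) (hh : ContDiff ℝ 2 h) (hgh : EqOn g h (Icc a b)) :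
    EqOn (deriv (deriv g)) (deriv (deriv h)) (Icc a b) := by
  have h2 : (2 : WithTop ℕ∞) = 1 + 1 := one_add_one_eq_two.symm
  exact ContDiff.eqOn_deriv_Icc hab (h2 ▸ hg).deriv' (h2 ▸ hh).deriv'
    (ContDiff.eqOn_deriv_Icc hab (hg.of_le one_le_two) (hh.of_le one_le_two) hgh)

theorem ContDiff.deriv_deriv_eq_zero_of_eqOn_Icc {g : ℝ → ℝ} {a b t : ℝ} (hab : a < b)
    (hg : ContDiff ℝ 2 g) (h0 : ∀ s ∈ Icc a b, g s = 0) (ht : t ∈ Icc a b) :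
    deriv (deriv g) t = 0 := by
  simpa using ContDiff.eqOn_deriv_deriv_Icc hab hg (contDiff_const (c := (0 : ℝ))) h0 ht

theorem deriv_const_mul_cos (c ω : ℝ) :
    deriv (fun t => c * Real.cos (ω * t)) = fun t => -(c * ω) * Real.sin (ω * t) := by
  funext t
  have h := (((hasDerivAt_id t).const_mul ω).cos.const_mul c).deriv
  simp only [id, mul_one] at h
  rw [h]
  ring

theorem deriv_deriv_const_mul_cos (c ω : ℝ) :
    deriv (deriv fun t => c * Real.cos (ω * t))
      = fun t => -(ω ^ 2 * (c * Real.cos (ω * t))) := by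
  rw [deriv_const_mul_cos]
  funext t
  have h := (((hasDerivAt_id t).const_mul ω).sin.const_mul (-(c * ω))).deriv
  simp only [id, mul_one] at h
  rw [h]
  ring

/-- If `u` is a `C⁴` classical solution of the wave equation
`∂ₜₜu − ∂ₓₓu = q(x)cos(ωt)` on `[0,T] × [0,1]` with homogeneous Dirichlet boundary
conditions and zero initial data, then `W := ω²u + ∂ₜₜu` solves the homogeneous wave
equation with initial data `(q, 0)` and homogeneous Dirichlet boundary conditions. -/
theorem source_term_to_initial_datum
    (T ω : ℝ) (hT : 0 < T)
    (q : ℝ → ℝ) (hq : ContinuousOn q (Icc 0 1))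
    (u : ℝ → ℝ → ℝ) (hu : ContDiff ℝ 4 (Function.uncurry u))
    (hwave : ∀ t ∈ Icc (0:ℝ) T, ∀ x ∈ Icc (0:ℝ) 1,
      deriv (deriv (fun s => u s x)) t - deriv (deriv (fun y => u t y)) x
        = q x * Real.cos (ω * t))
    (hbc0 : ∀ t ∈ Icc (0:ℝ) T, u t 0 = 0)
    (hbc1 : ∀ t ∈ Icc (0:ℝ) T, u t 1 = 0)
    (hic0 : ∀ x ∈ Icc (0:ℝ) 1, u 0 x = 0)
    (hic1 : ∀ x ∈ Icc (0:ℝ) 1, deriv (fun s => u s x) 0 = 0)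
    (W : ℝ → ℝ → ℝ)
    (hW : W = fun t x => ω ^ 2 * u t x + deriv (deriv (fun s => u s x)) t) :
    (∀ t ∈ Icc (0:ℝ) T, ∀ x ∈ Icc (0:ℝ) 1,
        deriv (deriv (fun s => W s x)) t = deriv (deriv (fun y => W t y)) x)
    ∧ (∀ t ∈ Icc (0:ℝ) T, W t 0 = 0 ∧ W t 1 = 0)
    ∧ (∀ x ∈ Icc (0:ℝ) 1, W 0 x = q x)
    ∧ (∀ x ∈ Icc (0:ℝ) 1, deriv (fun s => W s x) 0 = 0) := by
  have sliceFst : ∀ {f : ℝ → ℝ → ℝ} {n : WithTop ℕ∞} (x : ℝ), ContDiff ℝ n (Function.uncurry f) →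
      ContDiff ℝ n fun s => f s x := fun x hf => hf.comp (contDiff_id.prodMk contDiff_const)
  have sliceSnd : ∀ {f : ℝ → ℝ → ℝ} {n : WithTop ℕ∞} (t : ℝ), ContDiff ℝ n (Function.uncurry f) →
      ContDiff ℝ n fun y => f t y := fun t hf => hf.comp (contDiff_const.prodMk contDiff_id)
  have h43 : (3 : WithTop ℕ∞) + 1 ≤ 4 := by norm_num
  have h32 : (2 : WithTop ℕ∞) + 1 ≤ 3 := by norm_num
  have h21 : (1 : WithTop ℕ∞) + 1 ≤ 2 := by norm_num
  have hu2 : ContDiff ℝ 2 (Function.uncurry u) := hu.of_le (by norm_num)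
  have ht := contDiff_partialFst h43 hu
  have htt := contDiff_partialFst h32 ht
  have hx := contDiff_partialSnd h43 hu
  have hxx := contDiff_partialSnd h32 hx
  have httt := contDiff_partialFst h21 htt
  have httx := contDiff_partialSnd h21 htt
  have hxxt := contDiff_partialFst h21 hxx
  -- the wave operator applied to `u`
  set v : ℝ → ℝ → ℝ := fun t x =>
    (-1) * partialSnd (partialSnd u) t x + partialFst (partialFst u) t x with hv_def
  have hv : ContDiff ℝ 2 (Function.uncurry v) := (contDiff_const.mul hxx).add htt
  have hvq : ∀ x ∈ Icc (0 : ℝ) 1, EqOn (fun t => v t x) (fun t => q x * Real.cos (ω * t))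
      (Icc 0 T) := fun x hx t ht => by
    have h : partialFst (partialFst u) t x - partialSnd (partialSnd u) t x
      = q x * Real.cos (ω * t) := hwave t ht x hx
    simp only [hv_def]
    linarith
  have hcos : ∀ c : ℝ, ContDiff ℝ 2 fun t => c * Real.cos (ω * t) := fun c => by fun_prop
  have hvt : partialFst v = fun t x => (-1) * partialFst (partialSnd (partialSnd u)) t x
      + partialFst (partialFst (partialFst u)) t x :=
    partialFst_const_mul_add _ (hxx.differentiable two_ne_zero) (htt.differentiable two_ne_zero)
  have hvtt : partialFst (partialFst v) = fun t x =>
      (-1) * partialFst (partialFst (partialSnd (partialSnd u))) t x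
      + partialFst (partialFst (partialFst (partialFst u))) t x := by
    rw [hvt]
    exact partialFst_const_mul_add _ (hxxt.differentiable one_ne_zero)
      (httt.differentiable one_ne_zero)
  have hcomm : ∀ {f : ℝ → ℝ → ℝ}, ContDiff ℝ 3 (Function.uncurry f) →
      partialFst (partialSnd (partialSnd f)) = partialSnd (partialSnd (partialFst f)) :=
    fun hf => by
      rw [partialFst_partialSnd_comm (contDiff_partialSnd h32 hf),
        partialFst_partialSnd_comm (hf.of_le (by norm_num))]
  have hcomm1 := hcomm (hu.of_le (by norm_num : (3 : WithTop ℕ∞) ≤ 4))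
  have hcomm2 := hcomm ht
  have hWt : partialFst W = fun t x => ω ^ 2 * partialFst u t x
      + partialFst (partialFst (partialFst u)) t x := by
    rw [hW]
    exact partialFst_const_mul_add _ (hu2.differentiable two_ne_zero)
      (htt.differentiable two_ne_zero)
  have hWtt : partialFst (partialFst W) = fun t x => ω ^ 2 * partialFst (partialFst u) t x
      + partialFst (partialFst (partialFst (partialFst u))) t x := by
    rw [hWt]
    exact partialFst_const_mul_add _ (ht.differentiable three_ne_zero)
      (httt.differentiable one_ne_zero)
  have hWx : partialSnd W = fun t x => ω ^ 2 * partialSnd u t x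
      + partialSnd (partialFst (partialFst u)) t x := by
    rw [hW]
    exact partialSnd_const_mul_add _ (hu2.differentiable two_ne_zero)
      (htt.differentiable two_ne_zero)
  have hWxx : partialSnd (partialSnd W) = fun t x => ω ^ 2 * partialSnd (partialSnd u) t x
      + partialSnd (partialSnd (partialFst (partialFst u))) t x := by
    rw [hWx]
    exact partialSnd_const_mul_add _ (hx.differentiable three_ne_zero)
      (httx.differentiable one_ne_zero)
  have h0T : (0 : ℝ) ∈ Icc 0 T := ⟨le_rfl, hT.le⟩
  have hbc : ∀ x, (∀ t ∈ Icc (0 : ℝ) T, u t x = 0) → ∀ t ∈ Icc (0 : ℝ) T, W t x = 0 :=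
    fun x h t ht => by
      simp only [hW]
      rw [h t ht, ContDiff.deriv_deriv_eq_zero_of_eqOn_Icc hT (sliceFst x hu2) h ht]
      ring
  refine ⟨fun t ht x hx => ?_, fun t ht => ⟨hbc 0 hbc0 t ht, hbc 1 hbc1 t ht⟩, fun x hx => ?_,
    fun x hx => ?_⟩
  · change partialFst (partialFst W) t x = partialSnd (partialSnd W) t x
    have hvtt' : partialFst (partialFst v) t x = -(ω ^ 2 * (q x * Real.cos (ω * t))) :=
      (ContDiff.eqOn_deriv_deriv_Icc hT (sliceFst x hv) (hcos (q x)) (hvq x hx) ht).trans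
        (congrFun (deriv_deriv_const_mul_cos (q x) ω) t)
    have hv' : v t x = q x * Real.cos (ω * t) := hvq x hx ht
    rw [← hv', hvtt, hcomm1, hcomm2] at hvtt'
    simp only [hv_def] at hvtt'
    rw [hWtt, hWxx]
    linarith
  · have h := hwave 0 h0T x hx
    rw [ContDiff.deriv_deriv_eq_zero_of_eqOn_Icc one_pos (sliceSnd 0 hu2) hic0 hx] at h
    simp only [hW]
    rw [hic0 x hx]
    simpa using h
  · change partialFst W 0 x = 0
    have hvt' : partialFst v 0 x = -(q x * ω) * Real.sin (ω * 0) :=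
      (ContDiff.eqOn_deriv_Icc hT ((sliceFst x hv).of_le one_le_two)
        ((hcos (q x)).of_le one_le_two) (hvq x hx) h0T).trans
        (congrFun (deriv_const_mul_cos (q x) ω) 0)
    have hxxt' : partialSnd (partialSnd (partialFst u)) 0 x = 0 :=
      ContDiff.deriv_deriv_eq_zero_of_eqOn_Icc one_pos
        (sliceSnd 0 (ht.of_le (by norm_num))) hic1 hx
    have hut : partialFst u 0 x = 0 := hic1 x hx
    rw [hvt, hcomm1] at hvt'
    simp only [hxxt', mul_zero, Real.sin_zero, zero_add] at hvt'
    simp only [hWt, hut, hvt', mul_zero, add_zero]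
end

section
/- Let T > 0, ω ∈ ℝ, and let q : [0,1] → ℝ be of class C². Let u : [0,T] × [0,1] → ℝ be of class C⁴ and satisfy ∂ₜₜu − ∂ₓₓu = q(x)·cos(ωt) on [0,T] × [0,1], u(t,0) = u(t,1) = 0 for all t ∈ [0,T], and u(0,x) = ∂ₜu(0,x) = 0 for all x ∈ [0,1]. Set w(t,x) := ω²·u(t,x) + ∂ₜₜu(t,x). Let z₁, z₂ : [0,T] → ℝ be of class C¹ and satisfy z₁'(t) = z₂(t), z₂'(t) = −ω²·z₁(t) + ∂ₓw(t,0) for all t ∈ [0,T], with z₁(0) = 0 and z₂(0) = 0. Then z₁(t) = ∂ₓu(t,0) for all t ∈ [0,T]. (This is the output-equivalence result, Proposition 2, stated for classical solutions: the measured Neumann output of the source problem coincides with the output of the cascaded wave–oscillator system.) -/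
open Set Filter MeasureTheory

/-- The partial derivative in the first variable as a value of the total derivative. -/
theorem hasDerivAt_fst_of_contDiff {g : ℝ → ℝ → ℝ} (hg : ContDiff ℝ 1 (Function.uncurry g))
    (t x : ℝ) :
    HasDerivAt (fun s => g s x) (fderiv ℝ (Function.uncurry g) (t, x) (1, 0)) t := by
  have hd : HasFDerivAt (Function.uncurry g) (fderiv ℝ (Function.uncurry g) (t, x)) (t, x) :=
    (hg.differentiable one_ne_zero _).hasFDerivAt
  exact hd.comp_hasDerivAt t ((hasDerivAt_id t).prodMk (hasDerivAt_const t x))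

/-- The partial derivative in the second variable as a value of the total derivative. -/
theorem hasDerivAt_snd_of_contDiff {g : ℝ → ℝ → ℝ} (hg : ContDiff ℝ 1 (Function.uncurry g))
    (t x : ℝ) :
    HasDerivAt (fun y => g t y) (fderiv ℝ (Function.uncurry g) (t, x) (0, 1)) x := by
  have hd : HasFDerivAt (Function.uncurry g) (fderiv ℝ (Function.uncurry g) (t, x)) (t, x) :=
    (hg.differentiable one_ne_zero _).hasFDerivAt
  exact hd.comp_hasDerivAt x ((hasDerivAt_const x t).prodMk (hasDerivAt_id x))

/-- Taking the partial derivative in the first variable costs one order of smoothness. -/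
theorem contDiff_uncurry_deriv_fst {g : ℝ → ℝ → ℝ} {n : ℕ}
    (hg : ContDiff ℝ (n + 1) (Function.uncurry g)) :
    ContDiff ℝ n (Function.uncurry fun t x => deriv (fun s => g s x) t) := by
  have h : (Function.uncurry fun t x => deriv (fun s => g s x) t)
      = fun p => fderiv ℝ (Function.uncurry g) p (1, 0) := by
    ext ⟨t, x⟩
    exact (hasDerivAt_fst_of_contDiff (hg.of_le (by simp)) t x).deriv
  rw [h]
  exact (hg.fderiv_right le_rfl).clm_apply contDiff_const

/-- Symmetry of mixed partial derivatives of a `C²` function of two real variables. -/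
theorem hasDerivAt_deriv_snd {g : ℝ → ℝ → ℝ} (hg : ContDiff ℝ 2 (Function.uncurry g))
    (t x : ℝ) :
    HasDerivAt (fun s => deriv (fun y => g s y) x)
      (deriv (fun y => deriv (fun s => g s y) t) x) t := by
  have hg1 : ContDiff ℝ 1 (Function.uncurry g) := hg.of_le one_le_two
  have hd : HasFDerivAt (fderiv ℝ (Function.uncurry g))
      (fderiv ℝ (fderiv ℝ (Function.uncurry g)) (t, x)) (t, x) :=
    ((hg.fderiv_right (m := 1) (by norm_num)).differentiable one_ne_zero _).hasFDerivAt
  have ht : HasDerivAt (fun s => fderiv ℝ (Function.uncurry g) (s, x) (0, 1))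
      (fderiv ℝ (fderiv ℝ (Function.uncurry g)) (t, x) (1, 0) (0, 1)) t := by
    have h : HasDerivAt (fun s => fderiv ℝ (Function.uncurry g) (s, x))
        (fderiv ℝ (fderiv ℝ (Function.uncurry g)) (t, x) (1, 0)) t :=
      hd.comp_hasDerivAt t ((hasDerivAt_id t).prodMk (hasDerivAt_const t x))
    exact (ContinuousLinearMap.apply ℝ ℝ ((0, 1) : ℝ × ℝ)).hasFDerivAt.comp_hasDerivAt t h
  have hx : HasDerivAt (fun y => fderiv ℝ (Function.uncurry g) (t, y) (1, 0))
      (fderiv ℝ (fderiv ℝ (Function.uncurry g)) (t, x) (0, 1) (1, 0)) x := by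
    have h : HasDerivAt (fun y => fderiv ℝ (Function.uncurry g) (t, y))
        (fderiv ℝ (fderiv ℝ (Function.uncurry g)) (t, x) (0, 1)) x :=
      hd.comp_hasDerivAt x ((hasDerivAt_const x t).prodMk (hasDerivAt_id x))
    exact (ContinuousLinearMap.apply ℝ ℝ ((1, 0) : ℝ × ℝ)).hasFDerivAt.comp_hasDerivAt x h
  have hsymm : IsSymmSndFDerivAt ℝ (Function.uncurry g) (t, x) :=
    hg.contDiffAt.isSymmSndFDerivAt (by simp)
  simp only [(hasDerivAt_fst_of_contDiff hg1 _ _).deriv,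
    (hasDerivAt_snd_of_contDiff hg1 _ _).deriv, hx.deriv]
  rw [hsymm.eq]
  exact ht

/-- A differentiable function vanishing on `[0, 1]` has derivative zero at the left endpoint. -/
theorem deriv_eq_zero_of_eq_zero_on_Icc {f : ℝ → ℝ} (hf : DifferentiableAt ℝ f 0)
    (h : ∀ x ∈ Icc (0:ℝ) 1, f x = 0) : deriv f 0 = 0 := by
  have h0 : (0:ℝ) ∈ Icc (0:ℝ) 1 := ⟨le_rfl, zero_le_one⟩
  have hu : UniqueDiffWithinAt ℝ (Icc (0:ℝ) 1) 0 := uniqueDiffOn_Icc zero_lt_one 0 h0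
  exact hu.eq_deriv _ hf.hasDerivAt.hasDerivWithinAt
    ((hasDerivWithinAt_const 0 _ (0:ℝ)).congr h (h 0 h0))

/-- A free harmonic oscillator started at rest stays at rest. -/
theorem harmonic_oscillator_eq_zero {T ω : ℝ} {a b : ℝ → ℝ}
    (ha : ∀ t ∈ Icc (0:ℝ) T, HasDerivAt a (b t) t)
    (hb : ∀ t ∈ Icc (0:ℝ) T, HasDerivAt b (-ω ^ 2 * a t) t)
    (ha0 : a 0 = 0) (hb0 : b 0 = 0) : ∀ t ∈ Icc (0:ℝ) T, a t = 0 := by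
  have energy : ∀ t ∈ Icc (0:ℝ) T, b t ^ 2 + ω ^ 2 * a t ^ 2 = 0 := by
    have hE : ∀ t ∈ Icc (0:ℝ) T, HasDerivAt (fun t => b t ^ 2 + ω ^ 2 * a t ^ 2) 0 t := by
      intro t ht
      refine (((hb t ht).pow 2).add (((ha t ht).pow 2).const_mul (ω ^ 2))).congr_deriv ?_
      push_cast
      ring
    intro t ht
    have h := constant_of_has_deriv_right_zero
      (fun s hs => (hE s hs).continuousAt.continuousWithinAt)
      (fun s hs => (hE s (Ico_subset_Icc_self hs)).hasDerivWithinAt) t ht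
    simpa [ha0, hb0] using h
  have hbz : ∀ t ∈ Icc (0:ℝ) T, b t = 0 := fun t ht => by
    have := energy t ht
    have h2 : 0 ≤ ω ^ 2 * a t ^ 2 := by positivity
    exact pow_eq_zero_iff two_ne_zero |>.1 (le_antisymm (by linarith) (sq_nonneg (b t)))
  intro t ht
  have h := constant_of_has_deriv_right_zero
    (fun s hs => (ha s hs).continuousAt.continuousWithinAt)
    (fun s hs => by
      have := (ha s (Ico_subset_Icc_self hs)).hasDerivWithinAt (s := Ici s)
      rwa [hbz s (Ico_subset_Icc_self hs)] at this) t ht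
  rw [h, ha0]

/-- output equivalence, Proposition 2 for classical solutions:
if `u` solves the wave equation with source `q(x)cos(ωt)`, Dirichlet boundary
conditions and zero initial data, `w := ω²u + ∂ₜₜu`, and `(z₁, z₂)` is the harmonic
oscillator of frequency `ω` driven by the Neumann trace `∂ₓw(·,0)` started at rest,
then `z₁(t) = ∂ₓu(t,0)` for all `t ∈ [0,T]`. -/
theorem output_equivalence
    (T ω : ℝ) (hT : 0 < T)
    (q : ℝ → ℝ) (hq : ContDiff ℝ 2 q)
    (u : ℝ → ℝ → ℝ) (hu : ContDiff ℝ 4 (Function.uncurry u))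
    (hwave : ∀ t ∈ Icc (0:ℝ) T, ∀ x ∈ Icc (0:ℝ) 1,
      deriv (deriv (fun s => u s x)) t - deriv (deriv (fun y => u t y)) x
        = q x * Real.cos (ω * t))
    (hbc0 : ∀ t ∈ Icc (0:ℝ) T, u t 0 = 0)
    (hbc1 : ∀ t ∈ Icc (0:ℝ) T, u t 1 = 0)
    (hic0 : ∀ x ∈ Icc (0:ℝ) 1, u 0 x = 0)
    (hic1 : ∀ x ∈ Icc (0:ℝ) 1, deriv (fun s => u s x) 0 = 0)
    (w : ℝ → ℝ → ℝ)
    (hw : w = fun t x => ω ^ 2 * u t x + deriv (deriv (fun s => u s x)) t)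
    (z₁ z₂ : ℝ → ℝ) (hz₁ : ContDiff ℝ 1 z₁) (hz₂ : ContDiff ℝ 1 z₂)
    (hode1 : ∀ t ∈ Icc (0:ℝ) T, deriv z₁ t = z₂ t)
    (hode2 : ∀ t ∈ Icc (0:ℝ) T,
      deriv z₂ t = -ω ^ 2 * z₁ t + deriv (fun y => w t y) 0)
    (hz₁0 : z₁ 0 = 0) (hz₂0 : z₂ 0 = 0) :
    ∀ t ∈ Icc (0:ℝ) T, z₁ t = deriv (fun y => u t y) 0 := by
  have hu2 : ContDiff ℝ 2 (Function.uncurry u) := hu.of_le (by norm_num)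
  have hut : ContDiff ℝ 3 (Function.uncurry fun t x => deriv (fun s => u s x) t) :=
    contDiff_uncurry_deriv_fst (n := 3) (hu.of_le (by norm_num))
  have hutt : ContDiff ℝ 2 (Function.uncurry fun t x => deriv (deriv fun s => u s x) t) :=
    contDiff_uncurry_deriv_fst (n := 2) (hut.of_le (by norm_num))
  have hux (t : ℝ) : DifferentiableAt ℝ (fun y => u t y) 0 :=
    (hasDerivAt_snd_of_contDiff (hu2.of_le one_le_two) t 0).differentiableAt
  have hutx : DifferentiableAt ℝ (fun y => deriv (fun s => u s y) 0) 0 :=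
    (hasDerivAt_snd_of_contDiff (hut.of_le (by norm_num)) 0 0).differentiableAt
  have huttx (t : ℝ) : DifferentiableAt ℝ (fun y => deriv (deriv fun s => u s y) t) 0 :=
    (hasDerivAt_snd_of_contDiff (hutt.of_le one_le_two) t 0).differentiableAt
  have hv (t : ℝ) := hasDerivAt_deriv_snd hu2 t 0
  have hv' (t : ℝ) := hasDerivAt_deriv_snd (hut.of_le (by norm_num)) t 0
  have hwx (t : ℝ) : deriv (fun y => w t y) 0
      = ω ^ 2 * deriv (fun y => u t y) 0
        + deriv (fun y => deriv (deriv fun s => u s y) t) 0 := by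
    rw [hw]
    exact (((hux t).hasDerivAt.const_mul (ω ^ 2)).add (huttx t).hasDerivAt).deriv
  intro t ht
  refine sub_eq_zero.1 (harmonic_oscillator_eq_zero (T := T) (ω := ω)
    (a := fun t => z₁ t - deriv (fun y => u t y) 0)
    (b := fun t => z₂ t - deriv (fun y => deriv (fun s => u s y) t) 0) ?_ ?_ ?_ ?_ t ht)
  · intro t ht
    have h := (hz₁.differentiable one_ne_zero t).hasDerivAt
    rw [hode1 t ht] at h
    exact h.sub (hv t)
  · intro t ht
    have h := (hz₂.differentiable one_ne_zero t).hasDerivAt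
    rw [hode2 t ht, hwx] at h
    refine (h.sub (hv' t)).congr_deriv ?_
    ring
  · simp only [hz₁0, deriv_eq_zero_of_eq_zero_on_Icc (hux 0) hic0, sub_zero]
  · simp only [hz₂0, deriv_eq_zero_of_eq_zero_on_Icc hutx hic1, sub_zero]
end

section
/- Let T > 0, let f : [0,T] → ℝ be of class C¹, and let v : [0,T] × [0,1] → ℝ be of class C² and satisfy ∂ₜₜv = ∂ₓₓv on [0,T] × [0,1], v(t,1) = 0 and v(t,0) = f(t) for all t ∈ [0,T]. Set q⁰(x) := v(0,x) and q¹(x) := ∂ₜv(0,x). Then ∫₀ᵀ |∂ₓv(t,0)|² dt ≤ 2(4T² + 3) · ∫₀ᵀ (f(t)² + f'(t)²) dt + 2(2 + T) · (∫₀¹ |∂ₓq⁰(x)|² dx + ∫₀¹ |q¹(x)|² dx). (This is the hidden boundary regularity estimate of Lemma 2, stated for classical solutions.) -/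
open Set Filter MeasureTheory intervalIntegral

/-- Integrated balance law `∂ₜA = ∂ₓB + C` over the rectangle `[0,τ] × [0,1]`. -/
theorem integral_balance_law {τ : ℝ} (hτ : 0 ≤ τ) {A A' B B' C : ℝ → ℝ → ℝ}
    (hA : ∀ t x, HasDerivAt (fun s => A s x) (A' t x) t)
    (hB : ∀ t x, HasDerivAt (fun y => B t y) (B' t x) x)
    (hAc : Continuous (Function.uncurry A)) (hA'c : Continuous (Function.uncurry A'))
    (hB'c : Continuous (Function.uncurry B')) (hCc : Continuous (Function.uncurry C))
    (h : ∀ t ∈ Icc (0:ℝ) τ, ∀ x ∈ Icc (0:ℝ) 1, A' t x = B' t x + C t x) :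
    (∫ x in (0:ℝ)..1, A τ x) - (∫ x in (0:ℝ)..1, A 0 x)
      = ∫ t in (0:ℝ)..τ, (B t 1 - B t 0 + ∫ x in (0:ℝ)..1, C t x) := by
  have slice : ∀ {F : ℝ → ℝ → ℝ}, Continuous (Function.uncurry F) →
      ∀ t, Continuous (F t) := fun hF t => hF.comp (Continuous.prodMk_right t)
  have slice' : ∀ {F : ℝ → ℝ → ℝ}, Continuous (Function.uncurry F) →
      ∀ x, Continuous (fun t => F t x) := fun hF x => hF.comp (Continuous.prodMk_left x)
  calc (∫ x in (0:ℝ)..1, A τ x) - (∫ x in (0:ℝ)..1, A 0 x)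
      = ∫ x in (0:ℝ)..1, (A τ x - A 0 x) :=
        (integral_sub ((slice hAc τ).intervalIntegrable _ _)
          ((slice hAc 0).intervalIntegrable _ _)).symm
    _ = ∫ x in (0:ℝ)..1, ∫ t in (0:ℝ)..τ, A' t x := by
        refine integral_congr fun x _ => ?_
        exact (integral_eq_sub_of_hasDerivAt (fun t _ => hA t x)
          ((slice' hA'c x).intervalIntegrable _ _)).symm
    _ = ∫ t in (0:ℝ)..τ, ∫ x in (0:ℝ)..1, A' t x := by
        symm
        apply intervalIntegral_intervalIntegral_swap
        have : IntegrableOn (Function.uncurry A') (uIcc 0 τ ×ˢ uIcc 0 1) :=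
          hA'c.continuousOn.integrableOn_compact (isCompact_uIcc.prod isCompact_uIcc)
        exact this.mono_set (prod_mono uIoc_subset_uIcc uIoc_subset_uIcc)
    _ = ∫ t in (0:ℝ)..τ, (B t 1 - B t 0 + ∫ x in (0:ℝ)..1, C t x) := by
        refine integral_congr fun t ht => ?_
        rw [uIcc_of_le hτ] at ht
        have e : (∫ x in (0:ℝ)..1, A' t x) = ∫ x in (0:ℝ)..1, (B' t x + C t x) := by
          refine integral_congr fun x hx => ?_
          rw [uIcc_of_le zero_le_one] at hx
          exact h t ht x hx
        simp only [e]
        rw [integral_add ((slice hB'c t).intervalIntegrable _ _)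
            ((slice hCc t).intervalIntegrable _ _),
          integral_eq_sub_of_hasDerivAt (fun x _ => hB t x)
            ((slice hB'c t).intervalIntegrable _ _)]

/-- The first coordinate partial derivative is the Fréchet derivative applied to `(1, 0)`. -/
theorem hasDerivAt_fst_of_differentiableAt {g : ℝ × ℝ → ℝ} {t x : ℝ}
    (hg : DifferentiableAt ℝ g (t, x)) :
    HasDerivAt (fun s => g (s, x)) (fderiv ℝ g (t, x) (1, 0)) t :=
  hg.hasFDerivAt.comp_hasDerivAt (f := fun s => (s, x)) t
    ((hasDerivAt_id t).prodMk (hasDerivAt_const t x))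

/-- The second coordinate partial derivative is the Fréchet derivative applied to `(0, 1)`. -/
theorem hasDerivAt_snd_of_differentiableAt {g : ℝ × ℝ → ℝ} {t x : ℝ}
    (hg : DifferentiableAt ℝ g (t, x)) :
    HasDerivAt (fun y => g (t, y)) (fderiv ℝ g (t, x) (0, 1)) x :=
  hg.hasFDerivAt.comp_hasDerivAt (f := fun y => (t, y)) x
    ((hasDerivAt_const x t).prodMk (hasDerivAt_id x))

/-- Hidden regularity for the first-order system `∂ₜp = ∂ₓq`, `∂ₜq = ∂ₓp`, with `p(t,1) = 0`. -/
theorem integral_sq_trace_le {T : ℝ} (hT : 0 < T) {p q pt px qt qx : ℝ → ℝ → ℝ}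
    (hpt : ∀ t x, HasDerivAt (fun s => p s x) (pt t x) t)
    (hpx : ∀ t x, HasDerivAt (fun y => p t y) (px t x) x)
    (hqt : ∀ t x, HasDerivAt (fun s => q s x) (qt t x) t)
    (hqx : ∀ t x, HasDerivAt (fun y => q t y) (qx t x) x)
    (hp : Continuous (Function.uncurry p)) (hq : Continuous (Function.uncurry q))
    (hptc : Continuous (Function.uncurry pt)) (hpxc : Continuous (Function.uncurry px))
    (hqtc : Continuous (Function.uncurry qt)) (hqxc : Continuous (Function.uncurry qx))
    (hsymm : ∀ t x, qt t x = px t x)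
    (hwave : ∀ t ∈ Icc (0:ℝ) T, ∀ x ∈ Icc (0:ℝ) 1, pt t x = qx t x)
    (hp1 : ∀ t ∈ Icc (0:ℝ) T, p t 1 = 0) :
    (∫ t in (0:ℝ)..T, q t 0 ^ 2)
      ≤ 2 * (4 * T ^ 2 + 3) * (∫ t in (0:ℝ)..T, p t 0 ^ 2)
        + 2 * (2 + T) * ((∫ x in (0:ℝ)..1, q 0 x ^ 2) + ∫ x in (0:ℝ)..1, p 0 x ^ 2) := by
  have hp' : Continuous fun z : ℝ × ℝ => p z.1 z.2 := hp
  have hq' : Continuous fun z : ℝ × ℝ => q z.1 z.2 := hq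
  have hpt' : Continuous fun z : ℝ × ℝ => pt z.1 z.2 := hptc
  have hpx' : Continuous fun z : ℝ × ℝ => px z.1 z.2 := hpxc
  have hqt' : Continuous fun z : ℝ × ℝ => qt z.1 z.2 := hqtc
  have hqx' : Continuous fun z : ℝ × ℝ => qx z.1 z.2 := hqxc
  have hpx1 : ∀ t, Continuous (p t) := fun t => hp.comp (Continuous.prodMk_right t)
  have hqx1 : ∀ t, Continuous (q t) := fun t => hq.comp (Continuous.prodMk_right t)
  have hp0 : Continuous fun t => p t 0 := hp.comp (Continuous.prodMk_left 0)
  have hq0 : Continuous fun t => q t 0 := hq.comp (Continuous.prodMk_left 0)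
  set E : ℝ → ℝ := fun t => ∫ x in (0:ℝ)..1, (p t x ^ 2 + q t x ^ 2) with hE
  set G : ℝ → ℝ := fun t => ∫ x in (0:ℝ)..1, (1 - x) * (2 * p t x * q t x) with hG
  set X := ∫ t in (0:ℝ)..T, q t 0 ^ 2 with hX
  set F := ∫ t in (0:ℝ)..T, p t 0 ^ 2 with hF
  have hEcont : Continuous E := by
    apply continuous_parametric_intervalIntegral_of_continuous'
    exact (hp'.pow 2).add (hq'.pow 2)
  have energy : ∀ τ ∈ Icc (0:ℝ) T,
      E τ - E 0 = ∫ t in (0:ℝ)..τ, - (2 * p t 0 * q t 0) := by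
    intro τ hτ
    have := integral_balance_law hτ.1 (A := fun t x => p t x ^ 2 + q t x ^ 2)
      (A' := fun t x => 2 * p t x * pt t x + 2 * q t x * qt t x)
      (B := fun t x => 2 * p t x * q t x)
      (B' := fun t x => 2 * px t x * q t x + 2 * p t x * qx t x)
      (C := fun _ _ => 0)
      (fun t x => by simpa using ((hpt t x).fun_pow 2).fun_add ((hqt t x).fun_pow 2))
      (fun t x => by simpa using ((hpx t x).const_mul 2).fun_mul (hqx t x))
      (by simp only [Function.uncurry_def]; fun_prop)
      (by simp only [Function.uncurry_def]; fun_prop)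
      (by simp only [Function.uncurry_def]; fun_prop)
      (by simp only [Function.uncurry_def]; fun_prop)
      (fun t ht x hx => by
        rw [hsymm, hwave t ⟨ht.1, ht.2.trans hτ.2⟩ x hx]; ring)
    rw [hE]
    simp only
    rw [this]
    refine integral_congr fun t ht => ?_
    rw [uIcc_of_le hτ.1] at ht
    simp [hp1 t ⟨ht.1, ht.2.trans hτ.2⟩]
  have multiplier : G T - G 0 = (∫ t in (0:ℝ)..T, E t) - (F + X) := by
    have := integral_balance_law hT.le (A := fun t x => (1 - x) * (2 * p t x * q t x))
      (A' := fun t x => (1 - x) * (2 * pt t x * q t x + 2 * p t x * qt t x))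
      (B := fun t x => (1 - x) * (p t x ^ 2 + q t x ^ 2))
      (B' := fun t x => (-1) * (p t x ^ 2 + q t x ^ 2)
        + (1 - x) * (2 * p t x * px t x + 2 * q t x * qx t x))
      (C := fun t x => p t x ^ 2 + q t x ^ 2)
      (fun t x => by
        simpa using (((hpt t x).const_mul 2).fun_mul (hqt t x)).const_mul (1 - x))
      (fun t x => by
        simpa using ((hasDerivAt_id x).const_sub 1).fun_mul
          (((hpx t x).fun_pow 2).fun_add ((hqx t x).fun_pow 2)))
      (by simp only [Function.uncurry_def]; fun_prop)
      (by simp only [Function.uncurry_def]; fun_prop)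
      (by simp only [Function.uncurry_def]; fun_prop)
      (by simp only [Function.uncurry_def]; fun_prop)
      (fun t ht x hx => by rw [hsymm, hwave t ht x hx]; ring)
    rw [hG]
    simp only
    rw [this, hF, hX, ← integral_add (Continuous.intervalIntegrable (by fun_prop) _ _)
      (Continuous.intervalIntegrable (by fun_prop) _ _),
      ← integral_sub (hEcont.intervalIntegrable _ _)
        (Continuous.intervalIntegrable (by fun_prop) _ _)]
    refine integral_congr fun t _ => ?_
    simp only [hE]
    ring
  have hGE : ∀ t, |G t| ≤ E t := by
    intro t
    have hc : Continuous fun x => (1 - x) * (2 * p t x * q t x) := by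
      have := hpx1 t; have := hqx1 t; fun_prop
    have hc2 : Continuous fun x => p t x ^ 2 + q t x ^ 2 := by
      have := hpx1 t; have := hqx1 t; fun_prop
    refine (abs_integral_le_integral_abs zero_le_one).trans ?_
    refine integral_mono_on zero_le_one (hc.abs.intervalIntegrable _ _)
      (hc2.intervalIntegrable _ _) fun x hx => ?_
    rw [abs_mul, abs_of_nonneg (by linarith [hx.2] : 0 ≤ 1 - x)]
    have h1 : |2 * p t x * q t x| ≤ p t x ^ 2 + q t x ^ 2 := by
      rw [abs_le]
      constructor <;> nlinarith [sq_nonneg (p t x + q t x), sq_nonneg (p t x - q t x)]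
    nlinarith [hx.1, hx.2, abs_nonneg (2 * p t x * q t x)]
  have hbound : ∀ τ ∈ Icc (0:ℝ) T, (1 + T) * (E τ - E 0) ≤ X / 2 + 2 * (1 + T) ^ 2 * F := by
    intro τ hτ
    have hc : Continuous fun t => q t 0 ^ 2 / 2 + 2 * (1 + T) ^ 2 * p t 0 ^ 2 := by fun_prop
    calc (1 + T) * (E τ - E 0)
        = ∫ t in (0:ℝ)..τ, (1 + T) * -(2 * p t 0 * q t 0) := by
          rw [energy τ hτ, intervalIntegral.integral_const_mul]
      _ ≤ ∫ t in (0:ℝ)..τ, (q t 0 ^ 2 / 2 + 2 * (1 + T) ^ 2 * p t 0 ^ 2) := by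
          refine integral_mono_on hτ.1 (Continuous.intervalIntegrable (by fun_prop) _ _)
            (hc.intervalIntegrable _ _) fun t _ => ?_
          nlinarith [sq_nonneg (q t 0 + 2 * (1 + T) * p t 0)]
      _ ≤ ∫ t in (0:ℝ)..T, (q t 0 ^ 2 / 2 + 2 * (1 + T) ^ 2 * p t 0 ^ 2) :=
          integral_mono_interval le_rfl hτ.1 hτ.2
            (Eventually.of_forall fun t => by simp only [Pi.zero_apply]; positivity)
            (hc.intervalIntegrable _ _)
      _ = X / 2 + 2 * (1 + T) ^ 2 * F := by
          rw [integral_add (Continuous.intervalIntegrable (by fun_prop) _ _)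
            (Continuous.intervalIntegrable (by fun_prop) _ _),
            intervalIntegral.integral_div, intervalIntegral.integral_const_mul]
  have hintE : (1 + T) * ((∫ t in (0:ℝ)..T, E t) - T * E 0)
      ≤ T * (X / 2 + 2 * (1 + T) ^ 2 * F) := by
    have := integral_mono_on (μ := volume) hT.le
      (Continuous.intervalIntegrable (by fun_prop) _ _)
      (continuous_const.intervalIntegrable _ _) hbound
    rw [intervalIntegral.integral_const_mul, integral_sub (hEcont.intervalIntegrable _ _)
      (continuous_const.intervalIntegrable _ _)] at this
    simpa only [intervalIntegral.integral_const, sub_zero, smul_eq_mul] using this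
  have hE0 : E 0 = (∫ x in (0:ℝ)..1, q 0 x ^ 2) + ∫ x in (0:ℝ)..1, p 0 x ^ 2 := by
    rw [add_comm]
    exact integral_add (((hpx1 0).pow 2).intervalIntegrable _ _)
      (((hqx1 0).pow 2).intervalIntegrable _ _)
  rw [← hE0]
  have hFnn : 0 ≤ F := integral_nonneg hT.le fun t _ => sq_nonneg _
  have hET := hbound T ⟨hT.le, le_rfl⟩
  have hsum : (∫ t in (0:ℝ)..T, E t) + E T
      ≤ (1 + T) * E 0 + (X / 2 + 2 * (1 + T) ^ 2 * F) := by
    refine le_of_mul_le_mul_left ?_ (by linarith : 0 < 1 + T)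
    linarith
  have hGT := neg_abs_le (G T)
  have hG0 := le_abs_self (G 0)
  have key : X ≤ 2 * (2 + T) * E 0 + (4 * (1 + T) ^ 2 - 2) * F := by
    linarith [hGE T, hGE 0]
  nlinarith [mul_nonneg (sq_nonneg (T - 1)) hFnn]

/-- hidden boundary regularity, Lemma 2: if `v` is a `C²` solution of
the homogeneous wave equation on `[0,T] × [0,1]` with `v(t,1) = 0` and
`v(t,0) = f(t)`, then the Neumann trace at `x = 0` satisfies
`∫₀ᵀ |∂ₓv(t,0)|² dt ≤ 2(4T²+3)‖f‖²_{H¹(0,T)} + 2(2+T)(‖∂ₓq⁰‖²_{L²} + ‖q¹‖²_{L²})`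
where `q⁰ = v(0,·)` and `q¹ = ∂ₜv(0,·)`. -/
theorem hidden_regularity_estimate
    (T : ℝ) (hT : 0 < T)
    (f : ℝ → ℝ) (hf : ContDiff ℝ 1 f)
    (v : ℝ → ℝ → ℝ) (hv : ContDiff ℝ 2 (Function.uncurry v))
    (hwave : ∀ t ∈ Icc (0:ℝ) T, ∀ x ∈ Icc (0:ℝ) 1,
      deriv (deriv (fun s => v s x)) t = deriv (deriv (fun y => v t y)) x)
    (hbc1 : ∀ t ∈ Icc (0:ℝ) T, v t 1 = 0)
    (hbc0 : ∀ t ∈ Icc (0:ℝ) T, v t 0 = f t) :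
    (∫ t in (0:ℝ)..T, (deriv (fun y => v t y) 0) ^ 2)
      ≤ 2 * (4 * T ^ 2 + 3) * (∫ t in (0:ℝ)..T, ((f t) ^ 2 + (deriv f t) ^ 2))
        + 2 * (2 + T) *
          ((∫ x in (0:ℝ)..1, (deriv (fun y => v 0 y) x) ^ 2)
            + (∫ x in (0:ℝ)..1, (deriv (fun s => v s x) 0) ^ 2)) := by
  have hunc : ContDiff ℝ 1 (fderiv ℝ (Function.uncurry v)) :=
    hv.fderiv_right (by norm_num)
  have hvd : Differentiable ℝ (Function.uncurry v) := hv.differentiable (by norm_num)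
  have hfd : Differentiable ℝ (fderiv ℝ (Function.uncurry v)) :=
    hunc.differentiable (by norm_num)
  have hdir : ∀ w : ℝ × ℝ, ContDiff ℝ 1 fun z => fderiv ℝ (Function.uncurry v) z w :=
    fun w => hunc.clm_apply contDiff_const
  have hdird : ∀ w : ℝ × ℝ, Differentiable ℝ fun z => fderiv ℝ (Function.uncurry v) z w :=
    fun w => (hdir w).differentiable (by norm_num)
  have hdirc : ∀ w w' : ℝ × ℝ,
      Continuous fun z => fderiv ℝ (fun z => fderiv ℝ (Function.uncurry v) z w) z w' :=
    fun w w' => ((hdir w).continuous_fderiv (by norm_num)).clm_apply continuous_const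
  have hvt : ∀ t x, HasDerivAt (fun s => v s x)
      (fderiv ℝ (Function.uncurry v) (t, x) (1, 0)) t :=
    fun t x => hasDerivAt_fst_of_differentiableAt (hvd (t, x))
  have hvx : ∀ t x, HasDerivAt (fun y => v t y)
      (fderiv ℝ (Function.uncurry v) (t, x) (0, 1)) x :=
    fun t x => hasDerivAt_snd_of_differentiableAt (hvd (t, x))
  have hdt : ∀ x, deriv (fun s => v s x)
      = fun t => fderiv ℝ (Function.uncurry v) (t, x) (1, 0) :=
    fun x => funext fun t => (hvt t x).deriv
  have hdx : ∀ t, deriv (fun y => v t y)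
      = fun x => fderiv ℝ (Function.uncurry v) (t, x) (0, 1) :=
    fun t => funext fun x => (hvx t x).deriv
  have htrace : ∀ t ∈ Icc (0:ℝ) T,
      fderiv ℝ (Function.uncurry v) (t, 0) (1, 0) = deriv f t := fun t ht =>
    (uniqueDiffOn_Icc hT t ht).eq_deriv _
      ((hvt t 0).hasDerivWithinAt.congr_of_mem (fun s hs => (hbc0 s hs).symm) ht)
      (hf.differentiable (by norm_num) t).hasDerivAt.hasDerivWithinAt
  have htrace1 : ∀ t ∈ Icc (0:ℝ) T,
      fderiv ℝ (Function.uncurry v) (t, 1) (1, 0) = 0 := fun t ht =>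
    (uniqueDiffOn_Icc hT t ht).eq_deriv _
      ((hvt t 1).hasDerivWithinAt.congr_of_mem (fun s hs => (hbc1 s hs).symm) ht)
      (hasDerivWithinAt_const t _ 0)
  have hsnd : ∀ z w w' : ℝ × ℝ, fderiv ℝ (fun z => fderiv ℝ (Function.uncurry v) z w) z w'
      = fderiv ℝ (fderiv ℝ (Function.uncurry v)) z w' w := fun z w w' => by
    rw [fderiv_clm_apply (hfd z) (differentiableAt_const w)]
    simp
  have main := integral_sq_trace_le hT
    (p := fun t x => fderiv ℝ (Function.uncurry v) (t, x) (1, 0))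
    (q := fun t x => fderiv ℝ (Function.uncurry v) (t, x) (0, 1))
    (fun t x => hasDerivAt_fst_of_differentiableAt (hdird (1, 0) (t, x)))
    (fun t x => hasDerivAt_snd_of_differentiableAt (hdird (1, 0) (t, x)))
    (fun t x => hasDerivAt_fst_of_differentiableAt (hdird (0, 1) (t, x)))
    (fun t x => hasDerivAt_snd_of_differentiableAt (hdird (0, 1) (t, x)))
    (hdir (1, 0)).continuous (hdir (0, 1)).continuous
    (hdirc _ _) (hdirc _ _) (hdirc _ _) (hdirc _ _)
    (fun t x => by
      rw [hsnd, hsnd]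
      exact hv.contDiffAt.isSymmSndFDerivAt (by simp) _ _)
    (fun t ht x hx => by
      have h := hwave t ht x hx
      rw [hdt, hdx] at h
      rwa [(hasDerivAt_fst_of_differentiableAt (hdird (1, 0) (t, x))).deriv,
        (hasDerivAt_snd_of_differentiableAt (hdird (0, 1) (t, x))).deriv] at h)
    htrace1
  simp only [hdt, hdx]
  refine main.trans ?_
  gcongr
  refine integral_mono_on hT.le
    (Continuous.intervalIntegrable
      (((hdir (1, 0)).continuous.comp (Continuous.prodMk_left 0)).pow 2) _ _)
    (Continuous.intervalIntegrable
      ((hf.continuous.pow 2).add ((hf.continuous_deriv le_rfl).pow 2)) _ _) fun t ht => ?_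
  simp only [htrace t ht]
  exact le_add_of_nonneg_left (sq_nonneg _)
end

section
/- Let (v¹, v², ξ₁, ξ₂, ξ₃) be a classical solution of the forward coupled observer system on [0,T]. Then for every t ∈ [0,T]: ∫₀¹ (|∂ₓv¹(t,x)|² + |v²(t,x)|²) dx + γ₁·ξ₂(t)² + γ₁ω²·ξ₁(t)² + 2γ₁γ₂ω² · ∫₀ᵗ ξ₁(s)² ds = ∫₀¹ (|∂ₓv¹(0,x)|² + |v²(0,x)|²) dx + γ₁·ξ₂(0)² + γ₁ω²·ξ₁(0)². (This is the first energy identity of Proposition 3.) -/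
open Set Filter MeasureTheory intervalIntegral

/-- A classical solution of the forward coupled observer system on `[0,T]`:
`∂ₜv¹ = v²`, `∂ₜv² = ∂ₓₓv¹` on `[0,T] × [0,1]`, boundary conditions `v¹(t,1) = 0`,
`v¹(t,0) = γ₁ξ₁(t) + γ₁γ₂ξ₃(t)`, and the observer ODEs `ξ₁' = ξ₂ − γ₂ξ₁`,
`ξ₂' = −ω²ξ₁ + ∂ₓv¹(·,0)`, `ξ₃' = ξ₁` on `[0,T]`. -/
structure FwdObserverSol (T ω γ₁ γ₂ : ℝ) where
  v1 : ℝ → ℝ → ℝ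
  v2 : ℝ → ℝ → ℝ
  ξ1 : ℝ → ℝ
  ξ2 : ℝ → ℝ
  ξ3 : ℝ → ℝ
  smooth_v1 : ContDiff ℝ 2 (Function.uncurry v1)
  smooth_v2 : ContDiff ℝ 2 (Function.uncurry v2)
  smooth_ξ1 : ContDiff ℝ 1 ξ1
  smooth_ξ2 : ContDiff ℝ 1 ξ2
  smooth_ξ3 : ContDiff ℝ 1 ξ3
  pde1 : ∀ t ∈ Icc (0:ℝ) T, ∀ x ∈ Icc (0:ℝ) 1, deriv (fun s => v1 s x) t = v2 t x
  pde2 : ∀ t ∈ Icc (0:ℝ) T, ∀ x ∈ Icc (0:ℝ) 1,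
    deriv (fun s => v2 s x) t = deriv (deriv (fun y => v1 t y)) x
  bc1 : ∀ t ∈ Icc (0:ℝ) T, v1 t 1 = 0
  bc0 : ∀ t ∈ Icc (0:ℝ) T, v1 t 0 = γ₁ * ξ1 t + γ₁ * γ₂ * ξ3 t
  ode1 : ∀ t ∈ Icc (0:ℝ) T, deriv ξ1 t = ξ2 t - γ₂ * ξ1 t
  ode2 : ∀ t ∈ Icc (0:ℝ) T, deriv ξ2 t = -ω ^ 2 * ξ1 t + deriv (fun y => v1 t y) 0
  ode3 : ∀ t ∈ Icc (0:ℝ) T, deriv ξ3 t = ξ1 t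

section Slices

variable {E : Type*} [NormedAddCommGroup E] [NormedSpace ℝ E] {f : ℝ × ℝ → E}

/-- The derivative of a slice in the first variable. -/
lemma Differentiable.hasDerivAt_slice_fst (hf : Differentiable ℝ f) (t x : ℝ) :
    HasDerivAt (fun s => f (s, x)) (fderiv ℝ f (t, x) (1, 0)) t :=
  (hf (t, x)).hasFDerivAt.comp_hasDerivAt t ((hasDerivAt_id t).prodMk (hasDerivAt_const t x))

/-- The derivative of a slice in the second variable. -/
lemma Differentiable.hasDerivAt_slice_snd (hf : Differentiable ℝ f) (t x : ℝ) :
    HasDerivAt (fun y => f (t, y)) (fderiv ℝ f (t, x) (0, 1)) x :=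
  (hf (t, x)).hasFDerivAt.comp_hasDerivAt x ((hasDerivAt_const x t).prodMk (hasDerivAt_id x))

/-- Differentiation under the integral sign for a jointly `C¹` integrand. -/
lemma ContDiff.hasDerivAt_intervalIntegral (hf : ContDiff ℝ 1 f) (a b t : ℝ) :
    HasDerivAt (fun s => ∫ x in a..b, f (s, x))
      (∫ x in a..b, fderiv ℝ f (t, x) (1, 0)) t := by
  have hcont : Continuous fun z => fderiv ℝ f z (1, 0) :=
    (hf.continuous_fderiv one_ne_zero).clm_apply continuous_const
  obtain ⟨C, hC⟩ := ((isCompact_closedBall t 1).prod isCompact_uIcc).exists_bound_of_continuousOn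
    (s := Metric.closedBall t 1 ×ˢ uIcc a b) hcont.continuousOn
  refine (intervalIntegral.hasDerivAt_integral_of_dominated_loc_of_deriv_le
    (F := fun s x => f (s, x)) (F' := fun s x => fderiv ℝ f (s, x) (1, 0)) (bound := fun _ => C)
    (Metric.closedBall_mem_nhds t one_pos) ?_ ?_ ?_ ?_ ?_ ?_).2
  · exact Eventually.of_forall fun s =>
      (hf.continuous.comp (Continuous.prodMk_right s)).aestronglyMeasurable
  · exact (hf.continuous.comp (Continuous.prodMk_right t)).intervalIntegrable _ _
  · exact (hcont.comp (Continuous.prodMk_right t)).aestronglyMeasurable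
  · exact Eventually.of_forall fun x hx s hs => hC (s, x) ⟨hs, uIoc_subset_uIcc hx⟩
  · exact intervalIntegrable_const
  · exact Eventually.of_forall fun x _ s _ =>
      (hf.differentiable one_ne_zero).hasDerivAt_slice_fst s x

/-- A directional derivative of a `C²` function is `C¹`. -/
lemma ContDiff.fderiv_apply_const (hf : ContDiff ℝ 2 f) (v : ℝ × ℝ) :
    ContDiff ℝ 1 fun z => fderiv ℝ f z v :=
  (hf.fderiv_right (m := 1) (by norm_num)).clm_apply contDiff_const

/-- Directional derivatives of a `C²` function commute. -/
lemma ContDiff.fderiv_fderiv_comm (hf : ContDiff ℝ 2 f) (z v w : ℝ × ℝ) :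
    fderiv ℝ (fun y => fderiv ℝ f y v) z w = fderiv ℝ (fun y => fderiv ℝ f y w) z v := by
  have hd : DifferentiableAt ℝ (fderiv ℝ f) z :=
    (hf.fderiv_right (m := 1) (by norm_num)).differentiable one_ne_zero z
  have h (u : ℝ × ℝ) : HasFDerivAt (fun y => fderiv ℝ f y u)
      ((fderiv ℝ (fderiv ℝ f) z).flip u) z := by
    simpa using hd.hasFDerivAt.clm_apply (hasFDerivAt_const u z)
  rw [(h v).fderiv, (h w).fderiv]
  exact (hf.contDiffAt.isSymmSndFDerivAt (by simp)) w v

end Slices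

namespace FwdObserverSol

variable {T ω γ₁ γ₂ : ℝ} (S : FwdObserverSol T ω γ₁ γ₂)

/-- The gradient `∂ₓv¹`, as a function on the plane. -/
noncomputable def gradient (z : ℝ × ℝ) : ℝ := fderiv ℝ (Function.uncurry S.v1) z (0, 1)

lemma contDiff_gradient : ContDiff ℝ 1 S.gradient := S.smooth_v1.fderiv_apply_const (0, 1)

lemma deriv_v1_eq_gradient (t x : ℝ) : deriv (fun y => S.v1 t y) x = S.gradient (t, x) :=
  ((S.smooth_v1.differentiable two_ne_zero).hasDerivAt_slice_snd t x).deriv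

lemma fderiv_v1_eq_v2 {t x : ℝ} (ht : t ∈ Icc 0 T) (hx : x ∈ Icc (0 : ℝ) 1) :
    fderiv ℝ (Function.uncurry S.v1) (t, x) (1, 0) = S.v2 t x := by
  rw [← S.pde1 t ht x hx]
  exact ((S.smooth_v1.differentiable two_ne_zero).hasDerivAt_slice_fst t x).deriv.symm

/-- `∂ₜ∂ₓv¹ = ∂ₓv²`. -/
lemma fderiv_gradient_time {t x : ℝ} (ht : t ∈ Icc 0 T) (hx : x ∈ Ioo (0 : ℝ) 1) :
    fderiv ℝ S.gradient (t, x) (1, 0) = fderiv ℝ (Function.uncurry S.v2) (t, x) (0, 1) := by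
  have h1 := ((S.smooth_v1.fderiv_apply_const (1, 0)).differentiable
    one_ne_zero).hasDerivAt_slice_snd t x
  have h2 := (S.smooth_v2.differentiable two_ne_zero).hasDerivAt_slice_snd t x
  refine (S.smooth_v1.fderiv_fderiv_comm (t, x) (0, 1) (1, 0)).trans (h1.unique ?_)
  refine h2.congr_of_eventuallyEq ?_
  filter_upwards [Ioo_mem_nhds hx.1 hx.2] with y hy
  exact S.fderiv_v1_eq_v2 ht (Ioo_subset_Icc_self hy)

/-- `∂ₜv² = ∂ₓ∂ₓv¹`. -/
lemma fderiv_v2_time {t x : ℝ} (ht : t ∈ Icc 0 T) (hx : x ∈ Icc (0 : ℝ) 1) :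
    fderiv ℝ (Function.uncurry S.v2) (t, x) (1, 0) = fderiv ℝ S.gradient (t, x) (0, 1) := by
  have h1 := ((S.smooth_v2.differentiable two_ne_zero).hasDerivAt_slice_fst t x).deriv
  have h2 := ((S.contDiff_gradient.differentiable one_ne_zero).hasDerivAt_slice_snd t x).deriv
  rw [← h1, ← h2, ← funext (S.deriv_v1_eq_gradient t)]
  exact S.pde2 t ht x hx

lemma v2_one {t : ℝ} (ht : t ∈ Ioo 0 T) : S.v2 t 1 = 0 := by
  rw [← S.pde1 t (Ioo_subset_Icc_self ht) 1 (by simp)]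
  have h : (fun s => S.v1 s 1) =ᶠ[nhds t] fun _ => 0 := by
    filter_upwards [Ioo_mem_nhds ht.1 ht.2] with s hs
    exact S.bc1 s (Ioo_subset_Icc_self hs)
  rw [h.deriv_eq, deriv_const]

lemma hasDerivAt_ξ1 {t : ℝ} (ht : t ∈ Icc 0 T) : HasDerivAt S.ξ1 (S.ξ2 t - γ₂ * S.ξ1 t) t :=
  S.ode1 t ht ▸ (S.smooth_ξ1.differentiable one_ne_zero t).hasDerivAt

lemma hasDerivAt_ξ2 {t : ℝ} (ht : t ∈ Icc 0 T) :
    HasDerivAt S.ξ2 (-ω ^ 2 * S.ξ1 t + S.gradient (t, 0)) t :=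
  S.deriv_v1_eq_gradient t 0 ▸ S.ode2 t ht ▸
    (S.smooth_ξ2.differentiable one_ne_zero t).hasDerivAt

lemma hasDerivAt_ξ3 {t : ℝ} (ht : t ∈ Icc 0 T) : HasDerivAt S.ξ3 (S.ξ1 t) t :=
  S.ode3 t ht ▸ (S.smooth_ξ3.differentiable one_ne_zero t).hasDerivAt

lemma v2_zero {t : ℝ} (ht : t ∈ Ioo 0 T) : S.v2 t 0 = γ₁ * S.ξ2 t := by
  have ht' := Ioo_subset_Icc_self ht
  rw [← S.pde1 t ht' 0 (by simp)]
  have h : (fun s => S.v1 s 0) =ᶠ[nhds t] fun s => γ₁ * S.ξ1 s + γ₁ * γ₂ * S.ξ3 s := by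
    filter_upwards [Ioo_mem_nhds ht.1 ht.2] with s hs
    exact S.bc0 s (Ioo_subset_Icc_self hs)
  rw [h.deriv_eq, (((S.hasDerivAt_ξ1 ht').const_mul γ₁).fun_add
    ((S.hasDerivAt_ξ3 ht').const_mul (γ₁ * γ₂))).deriv]
  ring

/-- The energy density of the wave component. -/
noncomputable def energyDensity (z : ℝ × ℝ) : ℝ :=
  S.gradient z ^ 2 + Function.uncurry S.v2 z ^ 2

lemma contDiff_energyDensity : ContDiff ℝ 1 S.energyDensity :=
  (S.contDiff_gradient.pow 2).add ((S.smooth_v2.of_le (by norm_num)).pow 2)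

/-- The local conservation law `∂ₜ(|∂ₓv¹|² + |v²|²) = 2 ∂ₓ(∂ₓv¹ v²)`. -/
lemma hasDerivAt_energyFlux {t x : ℝ} (ht : t ∈ Icc 0 T) (hx : x ∈ Ioo (0 : ℝ) 1) :
    HasDerivAt (fun y => 2 * (S.gradient (t, y) * S.v2 t y))
      (fderiv ℝ S.energyDensity (t, x) (1, 0)) x := by
  have hg := S.contDiff_gradient.differentiable one_ne_zero
  have hv := S.smooth_v2.differentiable two_ne_zero
  have htime := ((hg.hasDerivAt_slice_fst t x).fun_pow 2).fun_add
    ((hv.hasDerivAt_slice_fst t x).fun_pow 2)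
  have heq := ((S.contDiff_energyDensity.differentiable
    one_ne_zero).hasDerivAt_slice_fst t x).unique htime
  rw [heq, S.fderiv_gradient_time ht hx, S.fderiv_v2_time ht (Ioo_subset_Icc_self hx)]
  refine (((hg.hasDerivAt_slice_snd t x).fun_mul
    (hv.hasDerivAt_slice_snd t x)).const_mul 2).congr_deriv ?_
  push_cast
  ring

lemma integral_fderiv_energyDensity {t : ℝ} (ht : t ∈ Ioo 0 T) :
    ∫ x in (0 : ℝ)..1, fderiv ℝ S.energyDensity (t, x) (1, 0)
      = -(2 * γ₁ * S.gradient (t, 0) * S.ξ2 t) := by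
  have hg : Continuous fun y => S.gradient (t, y) :=
    S.contDiff_gradient.continuous.comp (Continuous.prodMk_right t)
  have hv : Continuous fun y => S.v2 t y :=
    S.smooth_v2.continuous.comp (Continuous.prodMk_right t)
  have hd : Continuous fun x => fderiv ℝ S.energyDensity (t, x) (1, 0) :=
    ((S.contDiff_energyDensity.continuous_fderiv one_ne_zero).comp
      (Continuous.prodMk_right t)).clm_apply continuous_const
  rw [integral_eq_sub_of_hasDerivAt_of_le zero_le_one
    (f := fun y => 2 * (S.gradient (t, y) * S.v2 t y))
    (continuous_const.mul (hg.mul hv)).continuousOn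
    (fun x hx => S.hasDerivAt_energyFlux (Ioo_subset_Icc_self ht) hx)
    (hd.intervalIntegrable _ _), S.v2_one ht, S.v2_zero ht]
  ring

/-- The energy of the coupled system plus the energy dissipated so far. -/
noncomputable def totalEnergy (t : ℝ) : ℝ :=
  (∫ x in (0 : ℝ)..1, S.energyDensity (t, x))
    + γ₁ * S.ξ2 t ^ 2 + γ₁ * ω ^ 2 * S.ξ1 t ^ 2
    + 2 * γ₁ * γ₂ * ω ^ 2 * ∫ s in (0 : ℝ)..t, S.ξ1 s ^ 2

lemma continuous_totalEnergy : Continuous S.totalEnergy := by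
  have hE : Continuous fun t => ∫ x in (0 : ℝ)..1, S.energyDensity (t, x) :=
    continuous_iff_continuousAt.2 fun t =>
      (S.contDiff_energyDensity.hasDerivAt_intervalIntegral 0 1 t).continuousAt
  have h1 := S.smooth_ξ1.continuous
  have h2 := S.smooth_ξ2.continuous
  have hI : Continuous fun t => ∫ s in (0 : ℝ)..t, S.ξ1 s ^ 2 :=
    continuous_primitive (fun _ _ => (h1.pow 2).intervalIntegrable _ _) 0
  unfold totalEnergy
  fun_prop

lemma hasDerivAt_totalEnergy {t : ℝ} (ht : t ∈ Ioo 0 T) : HasDerivAt S.totalEnergy 0 t := by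
  have ht' := Ioo_subset_Icc_self ht
  have hE := S.contDiff_energyDensity.hasDerivAt_intervalIntegral 0 1 t
  rw [S.integral_fderiv_energyDensity ht] at hE
  have hI : HasDerivAt (fun t => ∫ s in (0 : ℝ)..t, S.ξ1 s ^ 2) (S.ξ1 t ^ 2) t :=
    (S.smooth_ξ1.continuous.pow 2).integral_hasStrictDerivAt 0 t |>.hasDerivAt
  refine (((hE.fun_add (((S.hasDerivAt_ξ2 ht').fun_pow 2).const_mul γ₁)).fun_add
    (((S.hasDerivAt_ξ1 ht').fun_pow 2).const_mul (γ₁ * ω ^ 2))).fun_add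
    (hI.const_mul (2 * γ₁ * γ₂ * ω ^ 2))).congr_deriv ?_
  push_cast
  ring

lemma totalEnergy_eq {t : ℝ} (ht : t ∈ Icc 0 T) : S.totalEnergy t = S.totalEnergy 0 := by
  rcases ht.1.eq_or_lt with rfl | h0
  · rfl
  obtain ⟨c, -, hc⟩ := exists_hasDerivAt_eq_slope S.totalEnergy (fun _ => 0) h0
    S.continuous_totalEnergy.continuousOn
    fun s hs => S.hasDerivAt_totalEnergy ⟨hs.1, hs.2.trans_le ht.2⟩
  have hne : t - 0 ≠ 0 := by simpa using h0.ne'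
  exact sub_eq_zero.1 ((div_eq_zero_iff.1 hc.symm).resolve_right hne)

end FwdObserverSol

/-- first energy identity of Proposition 3. -/
theorem forward_energy_identity
    (T ω γ₁ γ₂ : ℝ) (hT : 0 < T) (hγ₁ : 0 < γ₁) (hγ₂ : 0 < γ₂)
    (S : FwdObserverSol T ω γ₁ γ₂) :
    ∀ t ∈ Icc (0:ℝ) T,
      (∫ x in (0:ℝ)..1, ((deriv (fun y => S.v1 t y) x) ^ 2 + (S.v2 t x) ^ 2))
        + γ₁ * (S.ξ2 t) ^ 2 + γ₁ * ω ^ 2 * (S.ξ1 t) ^ 2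
        + 2 * γ₁ * γ₂ * ω ^ 2 * ∫ s in (0:ℝ)..t, (S.ξ1 s) ^ 2
      = (∫ x in (0:ℝ)..1, ((deriv (fun y => S.v1 0 y) x) ^ 2 + (S.v2 0 x) ^ 2))
        + γ₁ * (S.ξ2 0) ^ 2 + γ₁ * ω ^ 2 * (S.ξ1 0) ^ 2 := by
  intro t ht
  simpa [FwdObserverSol.totalEnergy, FwdObserverSol.energyDensity, S.deriv_v1_eq_gradient]
    using S.totalEnergy_eq ht
end
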